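/- Let A be a finitely generated commutative unital ℝ-algebra, let f₁,…,f_k ∈ A, let T be the preordering of A generated by f₁,…,f_k, and let h₁,…,h_m ∈ A be such that each h_j is bounded on K(T), i.e. there is a constant C with |χ(h_j)| ≤ C for all χ ∈ K(T) and j = 1,…,m. Then T satisfies (MP) if and only if for every λ ∈ h(K(T)) the preordering T_λ satisfies (MP). -/

import Mathlib

open MeasureTheory

/-- The preordering of a commutative ring generated by a set `S`:
the smallest subset containing all squares and `S`, closed under addition
and multiplication. -/
inductive IsInPreordering {A : Type*} [CommRing A] (S : Set A) : A → Prop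
  | sq (a : A) : IsInPreordering S (a ^ 2)
  | gen {a : A} : a ∈ S → IsInPreordering S a
  | add {a b : A} : IsInPreordering S a → IsInPreordering S b → IsInPreordering S (a + b)
  | mul {a b : A} : IsInPreordering S a → IsInPreordering S b → IsInPreordering S (a * b)

/-- The positivity set `K(T)` of the preordering generated by `S`, inside the
character space `A →ₐ[ℝ] ℝ`. -/
def KSet {A : Type*} [CommRing A] [Algebra ℝ A] (S : Set A) : Set (A →ₐ[ℝ] ℝ) :=
  {χ | ∀ a : A, IsInPreordering S a → 0 ≤ χ a}

/-- The character space carries the topology of pointwise convergence. -/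
noncomputable instance charTop (A : Type*) [CommRing A] [Algebra ℝ A] :
    TopologicalSpace (A →ₐ[ℝ] ℝ) :=
  TopologicalSpace.induced (fun χ (a : A) => χ a) Pi.topologicalSpace

/-- The Borel σ-algebra on the character space. -/
noncomputable instance charMeas (A : Type*) [CommRing A] [Algebra ℝ A] :
    MeasurableSpace (A →ₐ[ℝ] ℝ) := borel _

/-- `L` is a moment functional: it is given by integration against a positive
Borel measure on the character space. -/
def IsMomentFunctional {A : Type*} [CommRing A] [Algebra ℝ A] (L : A →ₗ[ℝ] ℝ) : Prop :=
  ∃ μ : Measure (A →ₐ[ℝ] ℝ),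
    ∀ a : A, Integrable (fun χ : A →ₐ[ℝ] ℝ => χ a) μ ∧ L a = ∫ χ : A →ₐ[ℝ] ℝ, χ a ∂μ

/-- The preordering generated by `S` has the moment property (MP): every linear
functional nonnegative on it is a moment functional. -/
def HasMP {A : Type*} [CommRing A] [Algebra ℝ A] (S : Set A) : Prop :=
  ∀ L : A →ₗ[ℝ] ℝ, (∀ a : A, IsInPreordering S a → 0 ≤ L a) → IsMomentFunctional L

/-- The generators of the fibre preordering `T_λ`. -/
def fibreGens {A : Type*} [CommRing A] [Algebra ℝ A] {k m : ℕ}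
    (f : Fin k → A) (h : Fin m → A) (lam : Fin m → ℝ) : Set A :=
  Set.range f ∪ ⋃ j : Fin m,
    {h j - algebraMap ℝ A (lam j), algebraMap ℝ A (lam j) - h j}

/-!
Only the passage from the fibres to `T` needs an argument. Let `L` be `T`-positive and let `p` be
nonnegative on all characters; by Haviland's theorem it is enough that `0 ≤ L p`. Since `A` has
countable dimension, `L` lies in a compact cap of the cone of `T`-positive functionals, and the
Krein–Milman theorem gives an extreme point `E` of the cap with `E p ≤ L p`. By the
Positivstellensatz an element `b` with `|b| ≤ C` on `K(T)` satisfies `|E (t * b)| ≤ C * E t` for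
`t ∈ T`. Hence `E` is, up to the factor `2 * C`, the sum of the `T`-positive functionals
`x ↦ E ((C ± b) * x)`, and extremality forces `E (b * x) = r * E x`. For `b = h j` this makes `E`
positive on some `T_λ`, where (MP) yields `0 ≤ E p`.

For the Positivstellensatz, a preordering without `-1` extends to an ordering, which is the pullback
of the order of a field with the intermediate value property for polynomials. Sign conditions are
then transferred from that field to `ℝ` by adjoining one variable at a time: a maximal common
ordered subfield of two such fields contains every element of the first whose type over it is
realised in the second, and an ultrapower of the second realises all types whose finite parts are
realised.
-/

theorem exists_common_mem_of_isChain {S α : Type*} [Preorder S] [SetLike S α] [IsConcreteLE S α]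
    {c : Set S} (hc : IsChain (· ≤ ·) c) {x y : α} (hx : x ∈ ⋃ s ∈ c, (s : Set α))
    (hy : y ∈ ⋃ s ∈ c, (s : Set α)) : ∃ s ∈ c, x ∈ s ∧ y ∈ s := by
  obtain ⟨s, hs, hxs⟩ := Set.mem_iUnion₂.mp hx
  obtain ⟨t, ht, hyt⟩ := Set.mem_iUnion₂.mp hy
  rcases hc.total hs ht with hle | hle
  · exact ⟨t, ht, SetLike.coe_subset_coe.mpr hle hxs, hyt⟩
  · exact ⟨s, hs, hxs, SetLike.coe_subset_coe.mpr hle hyt⟩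

section Preorderings

variable {A : Type*} [CommRing A]

theorem exists_maximal_ringPreordering_ge (P : RingPreordering A) :
    ∃ Q : RingPreordering A, P ≤ Q ∧ IsMax Q := by
  refine zorn_le_nonempty_Ici₀ P (fun c _ hc P₀ hP₀ ↦ ?_) P le_rfl
  refine ⟨.mk' (⋃ Q ∈ c, (Q : Set A)) (fun hx hy ↦ ?_) (fun hx hy ↦ ?_) (fun x ↦ ?_) ?_,
    fun Q hQ x hx ↦ Set.mem_biUnion hQ hx⟩
  · obtain ⟨Q, hQ, hx, hy⟩ := exists_common_mem_of_isChain hc hx hy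
    exact Set.mem_biUnion hQ (add_mem hx hy)
  · obtain ⟨Q, hQ, hx, hy⟩ := exists_common_mem_of_isChain hc hx hy
    exact Set.mem_biUnion hQ (mul_mem hx hy)
  · exact Set.mem_biUnion hP₀ (P₀.mul_self_mem x)
  · simp only [Set.mem_iUnion₂, SetLike.mem_coe, not_exists]
    exact fun Q _ ↦ Q.neg_one_notMem

theorem exists_mul_eq_one_add_of_isMax {Q : RingPreordering A} (hQ : IsMax Q) {a : A}
    (ha : -a ∉ Q) : ∃ x ∈ Q, ∃ y ∈ Q, y * a = 1 + x := by
  by_contra! hne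
  let Q' : RingPreordering A := .mk' {z | ∃ x ∈ Q, ∃ y ∈ Q, z = x - y * a}
    (by
      rintro _ _ ⟨x, hx, y, hy, rfl⟩ ⟨x', hx', y', hy', rfl⟩
      exact ⟨x + x', add_mem hx hx', y + y', add_mem hy hy', by ring⟩)
    (by
      rintro _ _ ⟨x, hx, y, hy, rfl⟩ ⟨x', hx', y', hy', rfl⟩
      exact ⟨x * x' + y * y' * (a * a),
        add_mem (mul_mem hx hx') (mul_mem (mul_mem hy hy') (Q.mul_self_mem a)),
        x * y' + y * x', add_mem (mul_mem hx hy') (mul_mem hy hx'), by ring⟩)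
    (fun x ↦ ⟨x * x, Q.mul_self_mem x, 0, zero_mem Q, by ring⟩)
    (by
      rintro ⟨x, hx, y, hy, hxy⟩
      exact hne x hx y hy (by linear_combination hxy))
  have hQQ' : Q ≤ Q' := fun x hx ↦ ⟨x, hx, 0, zero_mem Q, by ring⟩
  exact ha (hQ hQQ' ⟨0, zero_mem Q, 1, one_mem Q, by ring⟩)

theorem hasMemOrNegMem_of_isMax {Q : RingPreordering A} (hQ : IsMax Q) : HasMemOrNegMem Q where
  mem_or_neg_mem a := by
    by_contra! hnot
    obtain ⟨x, hx, y, hy, hxy⟩ := exists_mul_eq_one_add_of_isMax hQ hnot.2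
    obtain ⟨x', hx', y', hy', hxy'⟩ :=
      exists_mul_eq_one_add_of_isMax hQ (a := -a) (by rw [neg_neg]; exact hnot.1)
    apply Q.neg_one_notMem
    have key : -1 = x + x' + x * x' + y * y' * (a * a) := by
      linear_combination (1 + x') * hxy + y * a * hxy'
    rw [key]
    exact add_mem (add_mem (add_mem hx hx') (mul_mem hx hx'))
      (mul_mem (mul_mem hy hy') (Q.mul_self_mem a))

theorem isOrdering_of_isMax {Q : RingPreordering A} (hQ : IsMax Q) : Q.IsOrdering := by
  have := hasMemOrNegMem_of_isMax hQ
  have exists_mul {a : A} (ha : a ∉ Q.support) : ∃ x ∈ Q, ∃ y : A, y * a = 1 + x := by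
    by_cases hna : -a ∈ Q
    · have haQ : -(-a) ∉ Q := fun h ↦ ha ⟨neg_neg a ▸ h, hna⟩
      obtain ⟨x, hx, y, -, hxy⟩ := exists_mul_eq_one_add_of_isMax hQ haQ
      exact ⟨x, hx, -y, by linear_combination hxy⟩
    · obtain ⟨x, hx, y, -, hxy⟩ := exists_mul_eq_one_add_of_isMax hQ hna
      exact ⟨x, hx, y, hxy⟩
  refine RingPreordering.IsOrdering.mk' Q fun {a b} hab ↦ ?_
  by_contra! hnot
  obtain ⟨x, hx, y, hxy⟩ := exists_mul hnot.1
  obtain ⟨x', hx', y', hxy'⟩ := exists_mul hnot.2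
  have hsupp : (1 + x) * (1 + x') ∈ Q.support := by
    rw [← hxy, ← hxy', mul_mul_mul_comm]
    exact Q.support.mul_mem_left _ hab
  apply Q.neg_one_notMem
  have key : -1 = -((1 + x) * (1 + x')) + (x + x' + x * x') := by ring
  rw [key]
  exact add_mem hsupp.2 (add_mem (add_mem hx hx') (mul_mem hx hx'))

theorem exists_isOrdering_ge (P : RingPreordering A) :
    ∃ Q : RingPreordering A, P ≤ Q ∧ Q.IsOrdering := by
  obtain ⟨Q, hPQ, hQ⟩ := exists_maximal_ringPreordering_ge P
  exact ⟨Q, hPQ, isOrdering_of_isMax hQ⟩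

end Preorderings

section IVP

open Polynomial

section TotalCones

/-- A ring cone `C` is *total* if it is the cone of nonnegative elements of a linear order on some
subring of the ambient ring; that subring is `C ∪ -C`. -/
def IsTotalCone {Ω : Type*} [CommRing Ω] (C : RingCone Ω) : Prop :=
  ∀ a ∈ C, ∀ b ∈ C, a - b ∈ C ∨ b - a ∈ C

section Ring

variable {Ω : Type*} [CommRing Ω] {C : RingCone Ω}

/-- The subring `C ∪ -C` on which a total cone `C` defines a linear order. -/
def IsTotalCone.subring (hC : IsTotalCone C) : Subring Ω where
  carrier := {x | x ∈ C ∨ -x ∈ C}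
  zero_mem' := Or.inl (zero_mem C)
  one_mem' := Or.inl (one_mem C)
  neg_mem' := by
    rintro a (ha | ha)
    · exact Or.inr (by rwa [neg_neg])
    · exact Or.inl ha
  add_mem' := by
    rintro a b (ha | ha) (hb | hb)
    · exact Or.inl (add_mem ha hb)
    · have h := hC a ha (-b) hb
      rwa [sub_neg_eq_add, ← neg_add', add_comm b a] at h
    · have h := hC b hb (-a) ha
      rwa [sub_neg_eq_add, ← neg_add', add_comm b a] at h
    · exact Or.inr (by simpa only [neg_add] using add_mem ha hb)
  mul_mem' := by
    rintro a b (ha | ha) (hb | hb)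
    · exact Or.inl (mul_mem ha hb)
    · exact Or.inr (by simpa only [mul_neg] using mul_mem ha hb)
    · exact Or.inr (by simpa only [neg_mul] using mul_mem ha hb)
    · exact Or.inl (by simpa only [neg_mul_neg] using mul_mem ha hb)

theorem exists_isTotalCone_image {B : Type*} [CommRing B] (θ : B →+* Ω) (Q : RingPreordering B)
    [HasMemOrNegMem Q] (hker : RingHom.ker θ = Q.support) :
    ∃ D : RingCone Ω, IsTotalCone D ∧ (D : Set Ω) = θ '' Q := by
  have zero_iff (x : B) : θ x = 0 ↔ x ∈ Q ∧ -x ∈ Q := by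
    rw [← RingHom.mem_ker, hker, RingPreordering.mem_support]
  refine ⟨{ Q.toSubsemiring.map θ with
    eq_zero_of_mem_of_neg_mem' := ?_ }, ?_, rfl⟩
  · rintro _ ⟨a, ha, rfl⟩ ⟨b, hb, hab⟩
    have hsum : θ (a + b) = 0 := by rw [map_add, hab, add_neg_cancel]
    have hna : -a = -(a + b) + b := by ring
    exact (zero_iff a).mpr ⟨ha, hna ▸ add_mem ((zero_iff _).mp hsum).2 hb⟩
  · rintro _ ⟨a, -, rfl⟩ _ ⟨b, -, rfl⟩
    refine (mem_or_neg_mem Q (a - b)).imp (fun h ↦ ⟨_, h, map_sub θ a b⟩) fun h ↦ ⟨_, h, ?_⟩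
    rw [neg_sub, map_sub]

theorem exists_maximal_isTotalCone_ge (hC : IsTotalCone C) :
    ∃ D : RingCone Ω, C ≤ D ∧ Maximal IsTotalCone D := by
  refine zorn_le_nonempty₀ {D : RingCone Ω | IsTotalCone D} (fun c hc hchain D₀ hD₀ ↦ ?_) C hC
  refine ⟨{ carrier := ⋃ D ∈ c, (D : Set Ω)
            zero_mem' := Set.mem_biUnion hD₀ (zero_mem D₀)
            one_mem' := Set.mem_biUnion hD₀ (one_mem D₀)
            add_mem' := fun hx hy ↦ ?_
            mul_mem' := fun hx hy ↦ ?_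
            eq_zero_of_mem_of_neg_mem' := fun hx hy ↦ ?_ }, fun x hx y hy ↦ ?_,
    fun D hD x hx ↦ Set.mem_biUnion hD hx⟩
  all_goals obtain ⟨D, hD, hx, hy⟩ := exists_common_mem_of_isChain hchain hx hy
  · exact Set.mem_biUnion hD (mul_mem hx hy)
  · exact Set.mem_biUnion hD (add_mem hx hy)
  · exact eq_zero_of_mem_of_neg_mem hx hy
  · exact (hc hD x hx y hy).imp (Set.mem_biUnion hD) (Set.mem_biUnion hD)

end Ring

variable {Ω : Type*} [Field Ω] {C : RingCone Ω}

theorem inv_mem_of_maximal_isTotalCone (hC : Maximal IsTotalCone C) {a : Ω} (ha : a ∈ C) :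
    a⁻¹ ∈ C := by
  rcases eq_or_ne a 0 with rfl | ha₀
  · rwa [inv_zero]
  let D : RingCone Ω :=
    { carrier := {x | ∃ c ∈ C, c ≠ 0 ∧ x * c ∈ C}
      zero_mem' := ⟨1, one_mem C, one_ne_zero, by simp only [zero_mul, zero_mem]⟩
      one_mem' := ⟨1, one_mem C, one_ne_zero, by simp only [one_mul, one_mem]⟩
      add_mem' := by
        rintro x y ⟨c, hc, hc₀, hxc⟩ ⟨d, hd, hd₀, hyd⟩
        refine ⟨c * d, mul_mem hc hd, mul_ne_zero hc₀ hd₀, ?_⟩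
        rw [show (x + y) * (c * d) = x * c * d + y * d * c by ring]
        exact add_mem (mul_mem hxc hd) (mul_mem hyd hc)
      mul_mem' := by
        rintro x y ⟨c, hc, hc₀, hxc⟩ ⟨d, hd, hd₀, hyd⟩
        refine ⟨c * d, mul_mem hc hd, mul_ne_zero hc₀ hd₀, ?_⟩
        exact mul_mul_mul_comm x y c d ▸ mul_mem hxc hyd
      eq_zero_of_mem_of_neg_mem' := by
        rintro x ⟨c, hc, hc₀, hxc⟩ ⟨d, hd, hd₀, hxd⟩
        have hzero : x * c * d = 0 := by
          refine eq_zero_of_mem_of_neg_mem (mul_mem hxc hd) ?_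
          rw [show -(x * c * d) = -x * d * c by ring]
          exact mul_mem hxd hc
        simpa only [mul_eq_zero, hc₀, hd₀, or_false] using hzero }
  have hD : IsTotalCone D := by
    rintro x ⟨c, hc, hc₀, hxc⟩ y ⟨d, hd, hd₀, hyd⟩
    refine (hC.1 _ (mul_mem hxc hd) _ (mul_mem hyd hc)).imp
      (fun h ↦ ⟨c * d, mul_mem hc hd, mul_ne_zero hc₀ hd₀, ?_⟩)
      (fun h ↦ ⟨c * d, mul_mem hc hd, mul_ne_zero hc₀ hd₀, ?_⟩)
    · rwa [show (x - y) * (c * d) = x * c * d - y * d * c by ring]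
    · rwa [show (y - x) * (c * d) = y * d * c - x * c * d by ring]
  have hCD : C ≤ D := fun x hx ↦ ⟨1, one_mem C, one_ne_zero, by rwa [mul_one]⟩
  exact hC.2 hD hCD ⟨a, ha, ha₀, by rw [inv_mul_cancel₀ ha₀]; exact one_mem C⟩

theorem exists_orderedSubfield_of_maximal (hC : Maximal IsTotalCone C) :
    ∃ (R : Subfield Ω) (_ : LinearOrder R) (_ : IsStrictOrderedRing R),
      (∀ x, x ∈ R ↔ x ∈ C ∨ -x ∈ C) ∧ ∀ x : R, 0 ≤ x ↔ (x : Ω) ∈ C := by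
  classical
  let R : Subfield Ω :=
    { hC.1.subring with
      inv_mem' := fun x hx ↦ hx.imp (inv_mem_of_maximal_isTotalCone hC)
        fun h ↦ by simpa only [inv_neg] using inv_mem_of_maximal_isTotalCone hC h }
  let P : RingCone R :=
    { C.toSubsemiring.comap R.subtype with
      eq_zero_of_mem_of_neg_mem' := fun hx hy ↦
        Subtype.ext (C.eq_zero_of_mem_of_neg_mem' hx hy) }
  have : HasMemOrNegMem P := ⟨fun x ↦ x.2⟩
  let _ : LinearOrder R := .mkOfAddGroupCone P
  have _ : IsOrderedRing R := .mkOfCone P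
  refine ⟨R, inferInstance, IsOrderedRing.toIsStrictOrderedRing R, fun x ↦ Iff.rfl, fun x ↦ ?_⟩
  change x - 0 ∈ P ↔ _
  rw [sub_zero]
  rfl

end TotalCones

universe u

/-- The intermediate value property for polynomials. Among ordered fields it characterizes the real
closed ones. -/
def PolynomialIVP (R : Type*) [CommRing R] [LinearOrder R] : Prop :=
  ∀ (p : R[X]) (a b : R), a < b → p.eval a * p.eval b < 0 → ∃ c ∈ Set.Ioo a b, p.IsRoot c

section WeightedSquares

variable (E : Type*) [Field E] [LinearOrder E] [IsStrictOrderedRing E]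

/-- The multiplicative monoid of the polynomials `c * g ^ 2` with `0 ≤ c`. The semiring it generates
is the cone of sums of squares with nonnegative weights. -/
def weightedSquares : Submonoid E[X] where
  carrier := {q | ∃ c, 0 ≤ c ∧ ∃ g : E[X], q = C c * g ^ 2}
  one_mem' := ⟨1, zero_le_one, 1, by rw [map_one, one_pow, one_mul]⟩
  mul_mem' := by
    rintro _ _ ⟨c, hc, g, rfl⟩ ⟨d, hd, k, rfl⟩
    exact ⟨c * d, mul_nonneg hc hd, g * k, by rw [map_mul]; ring⟩

variable {E}

theorem eval_nonneg_of_mem_subsemiringClosure {s : E[X]}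
    (hs : s ∈ (weightedSquares E).subsemiringClosure) (a : E) : 0 ≤ s.eval a := by
  rw [Submonoid.subsemiringClosure_mem] at hs
  induction hs using AddSubmonoid.closure_induction with
  | mem _ h =>
    obtain ⟨c, hc, g, rfl⟩ := h
    rw [eval_mul, eval_C, eval_pow]
    positivity
  | zero => rw [eval_zero]
  | add _ _ _ _ ihs iht => exact eval_add (R := E) ▸ add_nonneg ihs iht

theorem exists_natDegree_le_of_mem_subsemiringClosure {s : E[X]}
    (hs : s ∈ (weightedSquares E).subsemiringClosure) {p : E[X]} (hp : 0 < p.natDegree) :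
    ∃ t ∈ (weightedSquares E).subsemiringClosure,
      t.natDegree ≤ 2 * (p.natDegree - 1) ∧ p ∣ s - t := by
  simp only [Submonoid.subsemiringClosure_mem] at hs ⊢
  induction hs using AddSubmonoid.closure_induction with
  | mem _ h =>
    obtain ⟨c, hc, g, rfl⟩ := h
    refine ⟨C c * (g % p) ^ 2, AddSubmonoid.subset_closure ⟨c, hc, _, rfl⟩, ?_, ?_⟩
    · have hmod : (g % p).natDegree ≤ p.natDegree - 1 :=
        Nat.le_sub_one_of_lt (natDegree_mod_lt g hp.ne')
      exact (natDegree_C_mul_le _ _).trans (natDegree_pow_le_of_le 2 hmod)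
    · rw [← mul_sub, sq_sub_sq]
      have hdvd : p ∣ g - g % p := ⟨g / p, by linear_combination -EuclideanDomain.div_add_mod g p⟩
      exact (hdvd.mul_left _).mul_left _
  | zero => exact ⟨0, zero_mem _, natDegree_zero.trans_le (Nat.zero_le _),
    by simp only [sub_zero, dvd_zero]⟩
  | add s t _ _ ihs iht =>
    obtain ⟨s', hs', hsdeg, hsdvd⟩ := ihs
    obtain ⟨t', ht', htdeg, htdvd⟩ := iht
    exact ⟨s' + t', add_mem hs' ht', natDegree_add_le_of_degree_le hsdeg htdeg,
      add_sub_add_comm s t s' t' ▸ dvd_add hsdvd htdvd⟩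

theorem exists_irreducible_dvd_eval_mul_eval_neg {q : E[X]} {a b : E}
    (h : q.eval a * q.eval b < 0) :
    ∃ p : E[X], Irreducible p ∧ p ∣ q ∧ p.eval a * p.eval b < 0 := by
  induction q using WfDvdMonoid.induction_on_irreducible with
  | zero => simp only [eval_zero, mul_zero, lt_self_iff_false] at h
  | unit u hu =>
    obtain ⟨c, -, rfl⟩ := isUnit_iff.mp hu
    simp only [eval_C] at h
    exact absurd h (mul_self_nonneg c).not_gt
  | mul q' p _ hp ih =>
    rcases lt_or_ge (p.eval a * p.eval b) 0 with hneg | hnonneg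
    · exact ⟨p, hp, dvd_mul_right _ _, hneg⟩
    · rw [eval_mul, eval_mul, mul_mul_mul_comm] at h
      obtain ⟨p', hirr, hdvd, hneg⟩ := ih (neg_of_mul_neg_right h hnonneg)
      exact ⟨p', hirr, hdvd.mul_left _, hneg⟩

/-- Descent on the degree: reducing the weights modulo `p` gives `1 + s = p * q` with
`deg q < deg p`, and `q` inherits the sign change of `p` because `1 + s` is positive. -/
theorem not_dvd_one_add_of_eval_mul_eval_neg {p : E[X]} (hirr : Irreducible p) {a b : E}
    (hsign : p.eval a * p.eval b < 0) {s : E[X]}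
    (hs : s ∈ (weightedSquares E).subsemiringClosure) : ¬ p ∣ 1 + s := by
  induction hn : p.natDegree using Nat.strong_induction_on generalizing p s with
  | _ n ih =>
  intro hdvd
  have hpos := hirr.natDegree_pos
  obtain ⟨t, ht, htdeg, hst⟩ := exists_natDegree_le_of_mem_subsemiringClosure hs hpos
  obtain ⟨q, hq⟩ : p ∣ 1 + t := by
    simpa only [add_sub_assoc, sub_sub_cancel] using dvd_sub hdvd hst
  have eval_pos (x : E) : 0 < p.eval x * q.eval x := by
    rw [← eval_mul, ← hq, eval_add, eval_one]
    exact add_pos_of_pos_of_nonneg one_pos (eval_nonneg_of_mem_subsemiringClosure ht x)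
  have hqsign : q.eval a * q.eval b < 0 := by
    have hmul := mul_pos (eval_pos a) (eval_pos b)
    rw [mul_mul_mul_comm] at hmul
    exact neg_of_mul_pos_right hmul hsign.le
  obtain ⟨r, hr, hrq, hrsign⟩ := exists_irreducible_dvd_eval_mul_eval_neg hqsign
  have hq₀ : q ≠ 0 := by
    rintro rfl
    simp only [eval_zero, mul_zero, lt_self_iff_false] at hqsign
  have hrdeg : r.natDegree < n := by
    have hmul : p.natDegree + q.natDegree = (1 + t).natDegree := by
      rw [hq, natDegree_mul hirr.ne_zero hq₀]
    have hadd : (1 + t).natDegree ≤ 2 * (p.natDegree - 1) :=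
      natDegree_add_le_of_degree_le (natDegree_one.trans_le (Nat.zero_le _)) htdeg
    have := natDegree_le_of_dvd hrq hq₀
    omega
  exact ih _ hrdeg hr hrsign ht rfl (hq ▸ hrq.mul_left p)

theorem exists_isOrdering_adjoinRoot {p : E[X]} (hirr : Irreducible p) {a b : E}
    (hsign : p.eval a * p.eval b < 0) :
    ∃ Q : RingPreordering (AdjoinRoot p), Q.IsOrdering ∧ ∀ c, 0 ≤ c → AdjoinRoot.of p c ∈ Q := by
  let P : RingPreordering (AdjoinRoot p) :=
    { (weightedSquares E).subsemiringClosure.map (AdjoinRoot.mk p) with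
      mem_of_isSquare' := by
        rintro _ ⟨y, rfl⟩
        obtain ⟨g, rfl⟩ := AdjoinRoot.mk_surjective y
        refine ⟨g * g, AddSubmonoid.subset_closure ⟨1, zero_le_one, g, ?_⟩, map_mul _ g g⟩
        rw [map_one, one_mul, sq]
      neg_one_notMem' := by
        rintro ⟨s, hs, hs₁⟩
        refine not_dvd_one_add_of_eval_mul_eval_neg hirr hsign hs ?_
        rw [← AdjoinRoot.mk_eq_zero, map_add, map_one]
        exact hs₁ ▸ add_neg_cancel 1 }
  obtain ⟨Q, hPQ, hQ⟩ := exists_isOrdering_ge P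
  refine ⟨Q, hQ, fun c hc ↦ hPQ ⟨C c, AddSubmonoid.subset_closure ⟨c, hc, 1, ?_⟩, rfl⟩⟩
  rw [one_pow, mul_one]

end WeightedSquares

theorem mem_Ioo_of_isRoot_irreducible {E : Type*} [Field E] [LinearOrder E] [IsStrictOrderedRing E]
    {p : E[X]} (hirr : Irreducible p) {a b z : E} (hab : a < b)
    (hsign : p.eval a * p.eval b < 0) (hz : p.IsRoot z) : z ∈ Set.Ioo a b := by
  obtain ⟨u, rfl⟩ := dvd_iff_isRoot.mpr hz
  obtain ⟨c, -, rfl⟩ :=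
    isUnit_iff.mp ((hirr.isUnit_or_isUnit rfl).resolve_left (not_isUnit_X_sub_C z))
  simp only [eval_mul, eval_sub, eval_X, eval_C] at hsign
  rw [mul_mul_mul_comm] at hsign
  have hneg : (a - z) * (b - z) < 0 := neg_of_mul_neg_left hsign (mul_self_nonneg c)
  rcases mul_neg_iff.mp hneg with ⟨ha, hb⟩ | ⟨ha, hb⟩
  · exact absurd hab (sub_neg.mp hb |>.trans (sub_pos.mp ha)).not_gt
  · exact ⟨sub_neg.mp ha, sub_pos.mp hb⟩

section RealClosure

variable {Ω : Type*} [Field Ω] [IsAlgClosed Ω]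

theorem exists_isRoot_of_maximal_isTotalCone {C : RingCone Ω} (hC : Maximal IsTotalCone C)
    {R : Subfield Ω} [LinearOrder R] [IsStrictOrderedRing R] (hR : ∀ x, x ∈ R ↔ x ∈ C ∨ -x ∈ C)
    (hnonneg : ∀ x : R, 0 ≤ x ↔ (x : Ω) ∈ C) {p : R[X]} (hirr : Irreducible p) {a b : R}
    (hsign : p.eval a * p.eval b < 0) : ∃ z : R, p.IsRoot z := by
  have : Fact (Irreducible p) := ⟨hirr⟩
  obtain ⟨Q, hQ, hQnonneg⟩ := exists_isOrdering_adjoinRoot hirr hsign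
  obtain ⟨z, hz⟩ := IsAlgClosed.exists_eval₂_eq_zero R.subtype p
    (degree_pos_of_irreducible hirr).ne'
  let ι : AdjoinRoot p →+* Ω := AdjoinRoot.lift R.subtype z hz
  have hker : RingHom.ker ι = Q.support := by
    rw [RingPreordering.support_eq_bot, RingHom.injective_iff_ker_eq_bot ι |>.mp ι.injective]
  obtain ⟨D, hD, hDι⟩ := exists_isTotalCone_image ι Q hker
  have mem_D {y : AdjoinRoot p} (hy : y ∈ Q) : ι y ∈ D := by
    rw [← SetLike.mem_coe, hDι]
    exact Set.mem_image_of_mem ι hy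
  have hCD : C ≤ D := fun c hc ↦ by
    have hcR : c ∈ R := (hR c).mpr (Or.inl hc)
    have hcD := mem_D (hQnonneg ⟨c, hcR⟩ ((hnonneg _).mpr hc))
    rwa [AdjoinRoot.lift_of] at hcD
  have hzC : z ∈ C ∨ -z ∈ C := by
    have hroot : ι (AdjoinRoot.root p) = z := AdjoinRoot.lift_root hz
    rw [← hroot, ← map_neg]
    exact (mem_or_neg_mem Q (AdjoinRoot.root p)).imp (fun h ↦ hC.2 hD hCD (mem_D h))
      (fun h ↦ hC.2 hD hCD (mem_D h))
  refine ⟨⟨z, (hR z).mpr hzC⟩, R.subtype.injective ?_⟩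
  rw [map_zero, ← hz]
  exact (eval₂_hom R.subtype _).symm

theorem exists_polynomialIVP_of_isTotalCone {C : RingCone Ω} (hC : IsTotalCone C) :
    ∃ (R : Subfield Ω) (_ : LinearOrder R) (_ : IsStrictOrderedRing R), PolynomialIVP R ∧
      ∀ x ∈ C, ∃ hx : x ∈ R, (0 : R) ≤ ⟨x, hx⟩ := by
  obtain ⟨D, hCD, hD⟩ := exists_maximal_isTotalCone_ge hC
  obtain ⟨R, _, _, hR, hnonneg⟩ := exists_orderedSubfield_of_maximal hD
  refine ⟨R, inferInstance, inferInstance, fun q a b hab hq ↦ ?_,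
    fun x hx ↦ ⟨(hR x).mpr (Or.inl (hCD hx)), (hnonneg _).mpr (hCD hx)⟩⟩
  obtain ⟨p, hirr, hpq, hp⟩ := exists_irreducible_dvd_eval_mul_eval_neg hq
  obtain ⟨z, hz⟩ := exists_isRoot_of_maximal_isTotalCone hD hR hnonneg hirr hp
  exact ⟨z, mem_Ioo_of_isRoot_irreducible hirr hab hp hz, hz.dvd hpq⟩

end RealClosure

theorem exists_ringHom_nonneg_of_ringPreordering {A : Type u} [CommRing A]
    (P : RingPreordering A) :
    ∃ (R : Type u) (_ : Field R) (_ : LinearOrder R) (_ : IsStrictOrderedRing R) (θ : A →+* R),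
      PolynomialIVP R ∧ ∀ a ∈ P, 0 ≤ θ a := by
  obtain ⟨Q, hPQ, hQ⟩ := exists_isOrdering_ge P
  let K := FractionRing (A ⧸ Q.support)
  let Ω := AlgebraicClosure K
  let ι : A ⧸ Q.support →+* Ω := (algebraMap K Ω).comp (algebraMap _ K)
  have hι : Function.Injective ι :=
    (algebraMap K Ω).injective.comp (IsFractionRing.injective (A ⧸ Q.support) K)
  let θ : A →+* Ω := ι.comp (Ideal.Quotient.mk Q.support)
  have hker : RingHom.ker θ = Q.support := by
    rw [RingHom.ker_comp_of_injective _ hι, Ideal.mk_ker]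
  obtain ⟨C, hC, hCθ⟩ := exists_isTotalCone_image θ Q hker
  obtain ⟨R, _, _, hIVP, hR⟩ := exists_polynomialIVP_of_isTotalCone hC
  have nonneg {a : A} (ha : a ∈ Q) : ∃ h : θ a ∈ R, (0 : R) ≤ ⟨θ a, h⟩ := by
    apply hR
    rw [← SetLike.mem_coe, hCθ]
    exact Set.mem_image_of_mem θ ha
  have mem_R (a : A) : θ a ∈ R := by
    rcases mem_or_neg_mem Q a with h | h
    · exact (nonneg h).1
    · have hneg := (nonneg h).1
      rwa [map_neg, neg_mem_iff] at hneg
  exact ⟨R, inferInstance, inferInstance, inferInstance, θ.codRestrict R mem_R, hIVP,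
    fun a ha ↦ (nonneg (hPQ ha)).2⟩

end IVP

section SignTransfer

open Polynomial

section OrderedField

variable {R : Type*} [Field R] [LinearOrder R] [IsStrictOrderedRing R]

theorem PolynomialIVP.sign_eval_eq (hR : PolynomialIVP R) {f : R[X]} {a b : R}
    (hf : ∀ c ∈ Set.uIcc a b, ¬ f.IsRoot c) :
    SignType.sign (f.eval a) = SignType.sign (f.eval b) := by
  wlog hab : a ≤ b generalizing a b
  · exact (this (Set.uIcc_comm a b ▸ hf) (le_of_not_ge hab)).symm
  rw [Set.uIcc_of_le hab] at hf
  have ha : f.eval a ≠ 0 := hf a (Set.left_mem_Icc.mpr hab)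
  have hb : f.eval b ≠ 0 := hf b (Set.right_mem_Icc.mpr hab)
  have hmul : 0 ≤ f.eval a * f.eval b := by
    rcases hab.eq_or_lt with rfl | hlt
    · exact mul_self_nonneg _
    · by_contra! hneg
      obtain ⟨c, hc, hroot⟩ := hR f a b hlt hneg
      exact hf c (Set.Ioo_subset_Icc_self hc) hroot
  rcases pos_and_pos_or_neg_and_neg_of_mul_pos (hmul.lt_of_ne' (mul_ne_zero ha hb)) with h | h
  · rw [sign_pos h.1, sign_pos h.2]
  · rw [sign_neg h.1, sign_neg h.2]

theorem eval_mul_eval_pos_of_sign_eq {f : R[X]} {a b : R} (ha : ¬ f.IsRoot a)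
    (h : SignType.sign (f.eval a) = SignType.sign (f.eval b)) : 0 < f.eval a * f.eval b := by
  rcases lt_or_gt_of_ne ha with hneg | hpos
  · rw [sign_neg hneg, eq_comm, sign_eq_neg_one_iff] at h
    exact mul_pos_of_neg_of_neg hneg h
  · rw [sign_pos hpos, eq_comm, sign_eq_one_iff] at h
    exact mul_pos hpos h

theorem PolynomialIVP.exists_isRoot_derivative_mul (hR : PolynomialIVP R) (m n : ℕ) {g : R[X]}
    {r s : R} (hrs : r < s) (hg : ∀ c ∈ Set.Icc r s, ¬ g.IsRoot c) :
    ∃ c ∈ Set.Ioo r s,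
      (derivative ((X - C r) ^ (m + 1) * (X - C s) ^ (n + 1) * g)).IsRoot c := by
  -- The cofactor of `(X - r) ^ m * (X - s) ^ n` in the derivative; it changes sign.
  let h : R[X] := C (m + 1 : R) * (X - C s) * g + C (n + 1 : R) * (X - C r) * g +
    (X - C r) * (X - C s) * derivative g
  have hderiv : derivative ((X - C r) ^ (m + 1) * (X - C s) ^ (n + 1) * g) =
      (X - C r) ^ m * (X - C s) ^ n * h := by
    simp only [h, derivative_mul, derivative_X_sub_C_pow, Nat.add_sub_cancel, map_add,
      Nat.cast_add, Nat.cast_one, map_one, map_natCast]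
    ring
  have hsign := hR.sign_eval_eq (f := g) (a := r) (b := s) (by rwa [Set.uIcc_of_le hrs.le])
  have hpos := eval_mul_eval_pos_of_sign_eq (hg r (Set.left_mem_Icc.mpr hrs.le)) hsign
  have hneg : h.eval r * h.eval s < 0 := by
    have heval : h.eval r * h.eval s =
        -((m + 1) * (n + 1) * (s - r) ^ 2 * (g.eval r * g.eval s)) := by
      simp only [h, eval_add, eval_mul, eval_sub, eval_X, eval_C]
      ring
    have : 0 < s - r := sub_pos.mpr hrs
    rw [heval, neg_lt_zero]
    positivity
  obtain ⟨c, hc, hroot⟩ := hR h r s hrs hneg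
  exact ⟨c, hc, hderiv ▸ root_mul_left_of_isRoot _ hroot⟩

theorem PolynomialIVP.exists_isRoot_derivative_of_adjacent (hR : PolynomialIVP R) {p : R[X]}
    (hp : p ≠ 0) {r s : R} (hrs : r < s) (hr : p.IsRoot r) (hs : p.IsRoot s)
    (hadj : ∀ c ∈ Set.Ioo r s, ¬ p.IsRoot c) : ∃ c ∈ Set.Ioo r s, (derivative p).IsRoot c := by
  obtain ⟨k, hk, hkr⟩ := exists_eq_pow_rootMultiplicity_mul_and_not_dvd p hp r
  have hk₀ : k ≠ 0 := by
    rintro rfl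
    exact hkr (dvd_zero _)
  obtain ⟨g, hg, hgs⟩ := exists_eq_pow_rootMultiplicity_mul_and_not_dvd k hk₀ s
  have hks : k.IsRoot s := by
    rw [IsRoot.def, hk, eval_mul, eval_pow, eval_sub, eval_X, eval_C] at hs
    exact (mul_eq_zero.mp hs).resolve_left (pow_ne_zero _ (sub_ne_zero.mpr hrs.ne'))
  obtain ⟨m, hm⟩ := Nat.exists_eq_add_one.mpr ((rootMultiplicity_pos hp).mpr hr)
  obtain ⟨n, hn⟩ := Nat.exists_eq_add_one.mpr ((rootMultiplicity_pos hk₀).mpr hks)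
  have hkg : g ∣ k := Dvd.intro_left _ hg.symm
  have hkp : k ∣ p := Dvd.intro_left _ hk.symm
  rw [dvd_iff_isRoot] at hkr hgs
  have hroot : ∀ c ∈ Set.Icc r s, ¬ g.IsRoot c := fun c hc hcg ↦ by
    rcases hc.1.eq_or_lt with rfl | hrc
    · exact hkr (hcg.dvd hkg)
    rcases hc.2.eq_or_lt with rfl | hcs
    · exact hgs hcg
    · exact hadj c ⟨hrc, hcs⟩ (hcg.dvd (hkg.trans hkp))
  obtain ⟨c, hc, hcp⟩ := hR.exists_isRoot_derivative_mul m n hrs hroot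
  refine ⟨c, hc, ?_⟩
  rwa [hk, hg, hm, hn, ← mul_assoc]

theorem PolynomialIVP.exists_isRoot_derivative (hR : PolynomialIVP R) {p : R[X]} (hp : p ≠ 0)
    {r s : R} (hrs : r < s) (hr : p.IsRoot r) (hs : p.IsRoot s) :
    ∃ c ∈ Set.Ioo r s, (derivative p).IsRoot c := by
  classical
  let roots := p.roots.toFinset.filter (r < ·)
  have hmem {c : R} : c ∈ roots ↔ p.IsRoot c ∧ r < c := by
    rw [Finset.mem_filter, Multiset.mem_toFinset, mem_roots hp]
  have hne : roots.Nonempty := ⟨s, hmem.mpr ⟨hs, hrs⟩⟩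
  obtain ⟨ht, hrt⟩ := hmem.mp (roots.min'_mem hne)
  obtain ⟨c, hc, hcp⟩ := hR.exists_isRoot_derivative_of_adjacent hp hrt hr ht
    fun d hd hdp ↦ (roots.min'_le d (hmem.mpr ⟨hdp, hd.1⟩)).not_gt hd.2
  exact ⟨c, ⟨hc.1, hc.2.trans_le (roots.min'_le s (hmem.mpr ⟨hs, hrs⟩))⟩, hcp⟩

theorem PolynomialIVP.eq_of_isRoot_of_isRoot (hR : PolynomialIVP R) {p : R[X]} {a b : R}
    (hp' : ∀ c ∈ Set.Ioo a b, ¬ (derivative p).IsRoot c) {r s : R} (hr : r ∈ Set.Ioo a b)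
    (hs : s ∈ Set.Ioo a b) (hrp : p.IsRoot r) (hsp : p.IsRoot s) : r = s := by
  wlog hrs : r < s generalizing r s
  · by_contra hne
    exact hne (this hs hr hsp hrp (lt_of_le_of_ne (not_lt.mp hrs) (Ne.symm hne))).symm
  have hp : p ≠ 0 := by
    rintro rfl
    exact hp' r hr (by simp)
  obtain ⟨c, hc, hcp⟩ := hR.exists_isRoot_derivative hp hrs hrp hsp
  exact (hp' c ⟨hr.1.trans hc.1, hc.2.trans hs.2⟩ hcp).elim

theorem PolynomialIVP.eval_mul_eval_neg_of_isRoot (hR : PolynomialIVP R) {p : R[X]} {a r b : R}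
    (har : a < r) (hrb : r < b) (hr : p.IsRoot r)
    (hp' : ∀ c ∈ Set.Ioo a b, ¬ (derivative p).IsRoot c) : p.eval a * p.eval b < 0 := by
  have hp : p ≠ 0 := by
    rintro rfl
    exact hp' r ⟨har, hrb⟩ (by simp)
  obtain ⟨q, rfl⟩ := dvd_iff_isRoot.mpr hr
  have hq : ∀ c ∈ Set.Icc a b, ¬ q.IsRoot c := fun c hc hcq ↦ by
    have hcp : ((X - C r) * q).IsRoot c := root_mul_left_of_isRoot _ hcq
    rcases lt_trichotomy c r with hlt | rfl | hlt
    · obtain ⟨d, hd, hdp⟩ := hR.exists_isRoot_derivative hp hlt hcp hr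
      exact hp' d ⟨hc.1.trans_lt hd.1, hd.2.trans hrb⟩ hdp
    · exact hp' c ⟨har, hrb⟩ (by simp [hcq.eq_zero])
    · obtain ⟨d, hd, hdp⟩ := hR.exists_isRoot_derivative hp hlt hr hcp
      exact hp' d ⟨har.trans hd.1, hd.2.trans_le hc.2⟩ hdp
  have hab := (har.trans hrb).le
  have hpos := eval_mul_eval_pos_of_sign_eq (hq a (Set.left_mem_Icc.mpr hab))
    (hR.sign_eval_eq (by rwa [Set.uIcc_of_le hab]))
  have hmul : ((X - C r) * q).eval a * ((X - C r) * q).eval b =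
      -((r - a) * (b - r) * (q.eval a * q.eval b)) := by
    simp only [eval_mul, eval_sub, eval_X, eval_C]
    ring
  rw [hmul, neg_lt_zero]
  exact mul_pos (mul_pos (sub_pos.mpr har) (sub_pos.mpr hrb)) hpos

theorem abs_lt_of_isRoot {p : R[X]} (hp : p ≠ 0) {x : R} (hx : p.IsRoot x) :
    |x| < 1 + ∑ i ∈ Finset.range p.natDegree, |p.coeff i / p.leadingCoeff| := by
  have hlc : p.leadingCoeff ≠ 0 := leadingCoeff_ne_zero.mpr hp
  set M := ∑ i ∈ Finset.range p.natDegree, |p.coeff i / p.leadingCoeff|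
  have hM : 0 ≤ M := Finset.sum_nonneg fun _ _ ↦ abs_nonneg _
  by_contra! hle
  have hx₁ : 1 ≤ |x| := by linarith
  obtain ⟨n, hn⟩ := Nat.exists_eq_add_one.mpr
    (natDegree_pos_iff_degree_pos.mpr (degree_pos_of_root hp hx))
  have hpow : x ^ (n + 1) = -∑ i ∈ Finset.range (n + 1), p.coeff i / p.leadingCoeff * x ^ i := by
    have hsum : ∑ i ∈ Finset.range (n + 1), p.coeff i * x ^ i +
        p.leadingCoeff * x ^ (n + 1) = 0 := by
      rw [leadingCoeff, hn, ← Finset.sum_range_succ, ← hn, ← eval_eq_sum_range]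
      exact hx
    simp only [div_mul_eq_mul_div, ← Finset.sum_div]
    rw [← neg_div, eq_div_iff hlc]
    linear_combination hsum
  have hbound : |x| ^ n * |x| ≤ |x| ^ n * M := calc
    |x| ^ n * |x| = |∑ i ∈ Finset.range (n + 1), p.coeff i / p.leadingCoeff * x ^ i| := by
      rw [← pow_succ, ← abs_pow, hpow, abs_neg]
    _ ≤ ∑ i ∈ Finset.range (n + 1), |p.coeff i / p.leadingCoeff| * |x| ^ n := by
      refine (Finset.abs_sum_le_sum_abs _ _).trans (Finset.sum_le_sum fun i hi ↦ ?_)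
      rw [abs_mul, abs_pow]
      exact mul_le_mul_of_nonneg_left
        (pow_le_pow_right₀ hx₁ (Nat.lt_succ_iff.mp (Finset.mem_range.mp hi))) (abs_nonneg _)
    _ = |x| ^ n * M := by rw [← Finset.sum_mul, mul_comm, ← hn]
  have hxM := le_of_mul_le_mul_left hbound (pow_pos (zero_lt_one.trans_le hx₁) n)
  linarith

end OrderedField

section CommonSubfield

variable {K R R' : Type*} [Field K] [LinearOrder K] [Field R] [LinearOrder R] [Field R']
  [LinearOrder R'] {i : K →+* R} {i' : K →+* R'}

theorem not_isRoot_map_of_notMem_Ioo (hi : StrictMono i) {q : K[X]} (hq : q ≠ 0)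
    (hrange : ∀ x, (q.map i).IsRoot x → x ∈ Set.range i) {a b : K}
    (hab : ∀ c ∈ q.roots, c ∉ Set.Ioo a b) :
    ∀ x ∈ Set.Ioo (i a) (i b), ¬ (q.map i).IsRoot x := by
  rintro x hx hxq
  obtain ⟨c, rfl⟩ := hrange x hxq
  rw [isRoot_map_iff i.injective] at hxq
  exact hab c ((mem_roots hq).mpr hxq) ⟨hi.lt_iff_lt.mp hx.1, hi.lt_iff_lt.mp hx.2⟩

variable [IsStrictOrderedRing R]

theorem PolynomialIVP.sign_eval_map_eq (hR : PolynomialIVP R) (hi : StrictMono i) {q : K[X]}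
    {x : R} {m : K} (hq : ∀ c ∈ Set.uIcc x (i m), ¬ (q.map i).IsRoot c) :
    SignType.sign ((q.map i).eval x) = SignType.sign (q.eval m) := by
  rw [hR.sign_eval_eq hq, eval_map_apply, hi.sign_comp]

/-- The ordered field `K`, embedded in `R` and in `R'`, cannot be enlarged to a common ordered
subfield of both: elements of `R` and `R'` with the same type over `K` already come from `K`. -/
def IsMaximalCommonSubfield (i : K →+* R) (i' : K →+* R') : Prop :=
  ∀ x x', (∀ f : K[X], SignType.sign ((f.map i).eval x) = SignType.sign ((f.map i').eval x')) →
    ∃ k, i k = x ∧ i' k = x'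

variable [IsStrictOrderedRing K]

theorem exists_abs_lt_of_isRoot_map (hi : StrictMono i) {p : K[X]} (hp : p ≠ 0) {x : R}
    (hx : (p.map i).IsRoot x) : ∃ M : K, |x| < i M := by
  refine ⟨1 + ∑ j ∈ Finset.range p.natDegree, |p.coeff j / p.leadingCoeff|, ?_⟩
  have hbound := abs_lt_of_isRoot ((Polynomial.map_ne_zero_iff i.injective).mpr hp) hx
  have habs (y : K) : i |y| = |i y| := by
    rw [abs_eq_max_neg, hi.monotone.map_max, map_neg, abs_eq_max_neg]
  simpa only [map_add, map_one, map_sum, habs, map_div₀, natDegree_map, coeff_map,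
    leadingCoeff_map] using hbound

theorem exists_mem_Ioo_of_notMem_range {x : R} (hx : x ∉ Set.range i) {M : K}
    (hM : |x| < i M) (Z : Finset K) :
    ∃ a b : K, x ∈ Set.Ioo (i a) (i b) ∧ ∀ z ∈ Z, z ∉ Set.Ioo a b := by
  classical
  rw [abs_lt, ← map_neg] at hM
  let lower := (insert (-M) Z).filter (i · < x)
  let upper := (insert M Z).filter (x < i ·)
  have hlower : lower.Nonempty :=
    ⟨-M, Finset.mem_filter.mpr ⟨Finset.mem_insert_self _ _, hM.1⟩⟩
  have hupper : upper.Nonempty :=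
    ⟨M, Finset.mem_filter.mpr ⟨Finset.mem_insert_self _ _, hM.2⟩⟩
  refine ⟨lower.max' hlower, upper.min' hupper,
    ⟨(Finset.mem_filter.mp (lower.max'_mem hlower)).2,
      (Finset.mem_filter.mp (upper.min'_mem hupper)).2⟩, fun z hz hz' ↦ ?_⟩
  rcases lt_trichotomy (i z) x with hlt | rfl | hlt
  · exact (lower.le_max' z
      (Finset.mem_filter.mpr ⟨Finset.mem_insert_of_mem hz, hlt⟩)).not_gt hz'.1
  · exact hx ⟨z, rfl⟩
  · exact (upper.min'_le z
      (Finset.mem_filter.mpr ⟨Finset.mem_insert_of_mem hz, hlt⟩)).not_gt hz'.2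

end CommonSubfield

section Realisation

theorem eval_map_mod_of_isRoot_map {K S : Type*} [Field K] [CommRing S] (j : K →+* S)
    {p : K[X]} {y : S} (hy : (p.map j).IsRoot y) (f : K[X]) :
    ((f % p).map j).eval y = (f.map j).eval y := by
  conv_rhs => rw [← EuclideanDomain.div_add_mod f p]
  rw [Polynomial.map_add, Polynomial.map_mul, eval_add, eval_mul, hy.eq_zero, zero_mul, zero_add]

variable {K R R' : Type*} [Field K] [LinearOrder K] [Field R] [LinearOrder R]
  [IsStrictOrderedRing R] [Field R'] [LinearOrder R'] {i : K →+* R} {i' : K →+* R'}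

theorem PolynomialIVP.exists_isRoot_map_mem_Ioo (hR : PolynomialIVP R) (hR' : PolynomialIVP R')
    (hi : StrictMono i) (hi' : StrictMono i') {p : K[X]} {a b : K} {x : R}
    (hx : x ∈ Set.Ioo (i a) (i b)) (hxp : (p.map i).IsRoot x)
    (hp' : ∀ c ∈ Set.Ioo (i a) (i b), ¬ ((derivative p).map i).IsRoot c) :
    ∃ x' ∈ Set.Ioo (i' a) (i' b), (p.map i').IsRoot x' := by
  have hneg := hR.eval_mul_eval_neg_of_isRoot hx.1 hx.2 hxp (by rwa [derivative_map])
  rw [eval_map_apply, eval_map_apply, ← map_mul, ← map_zero i, hi.lt_iff_lt,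
    ← hi'.lt_iff_lt, map_zero, map_mul] at hneg
  refine hR' (p.map i') _ _ (hi' (hi.lt_iff_lt.mp (hx.1.trans hx.2))) ?_
  rwa [eval_map_apply, eval_map_apply]

/-- The roots in `R` of the nonzero polynomials over `K` of degree less than `n` lie in `K`. -/
def RootsMemRange (i : K →+* R) (n : ℕ) : Prop :=
  ∀ q : K[X], q ≠ 0 → q.natDegree < n → ∀ x, (q.map i).IsRoot x → x ∈ Set.range i

variable [IsStrictOrderedRing K]

theorem exists_Ioo_forall_not_isRoot_map (hi : StrictMono i) (hi' : StrictMono i') {n : ℕ}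
    (hroots : RootsMemRange i n) (hroots' : RootsMemRange i' n) {x : R} (hx : x ∉ Set.range i)
    {M : K} (hM : |x| < i M) (Z : Finset K) {F : Finset K[X]}
    (hF : ∀ q ∈ F, q ≠ 0 ∧ q.natDegree < n) :
    ∃ a b : K, x ∈ Set.Ioo (i a) (i b) ∧ (∀ z ∈ Z, z ∉ Set.Ioo a b) ∧
      ∀ q ∈ F, (∀ c ∈ Set.Ioo (i a) (i b), ¬ (q.map i).IsRoot c) ∧
        ∀ c ∈ Set.Ioo (i' a) (i' b), ¬ (q.map i').IsRoot c := by
  classical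
  obtain ⟨a, b, hxab, hab⟩ :=
    exists_mem_Ioo_of_notMem_range hx hM (Z ∪ F.biUnion fun q ↦ q.roots.toFinset)
  refine ⟨a, b, hxab, fun z hz ↦ hab z (Finset.mem_union_left _ hz), fun q hq ↦ ?_⟩
  obtain ⟨hq₀, hdeg⟩ := hF q hq
  have hqroots : ∀ c ∈ q.roots, c ∉ Set.Ioo a b := fun c hc ↦ hab c
    (Finset.mem_union_right _ (Finset.mem_biUnion.mpr ⟨q, hq, Multiset.mem_toFinset.mpr hc⟩))
  exact ⟨not_isRoot_map_of_notMem_Ioo hi hq₀ (hroots q hq₀ hdeg) hqroots,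
    not_isRoot_map_of_notMem_Ioo hi' hq₀ (hroots' q hq₀ hdeg) hqroots⟩

variable [IsStrictOrderedRing R']

theorem sign_eval_map_eq_of_mem_Ioo (hR : PolynomialIVP R) (hR' : PolynomialIVP R')
    (hi : StrictMono i) (hi' : StrictMono i') {q : K[X]} {a b : K} {x : R} {x' : R'}
    (hx : x ∈ Set.Ioo (i a) (i b)) (hx' : x' ∈ Set.Ioo (i' a) (i' b))
    (hq : ∀ c ∈ Set.Ioo (i a) (i b), ¬ (q.map i).IsRoot c)
    (hq' : ∀ c ∈ Set.Ioo (i' a) (i' b), ¬ (q.map i').IsRoot c) :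
    SignType.sign ((q.map i).eval x) = SignType.sign ((q.map i').eval x') := by
  obtain ⟨m, ham, hmb⟩ := exists_between (hi.lt_iff_lt.mp (hx.1.trans hx.2))
  rw [hR.sign_eval_map_eq hi (m := m) fun c hc ↦
      hq c (Set.ordConnected_Ioo.uIcc_subset hx ⟨hi ham, hi hmb⟩ hc),
    hR'.sign_eval_map_eq hi' (m := m) fun c hc ↦
      hq' c (Set.ordConnected_Ioo.uIcc_subset hx' ⟨hi' ham, hi' hmb⟩ hc)]

theorem exists_sign_eval_map_eq_of_isRoot (hR : PolynomialIVP R) (hR' : PolynomialIVP R')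
    (hi : StrictMono i) (hi' : StrictMono i') {p : K[X]} (hp : p ≠ 0)
    (hroots : RootsMemRange i p.natDegree) (hroots' : RootsMemRange i' p.natDegree) {x : R}
    (hx : (p.map i).IsRoot x) (hxi : x ∉ Set.range i) :
    ∃ x', ∀ f : K[X], SignType.sign ((f.map i).eval x) = SignType.sign ((f.map i').eval x') := by
  classical
  have hdeg : p.natDegree ≠ 0 := by
    rw [← natDegree_map i, ← Nat.pos_iff_ne_zero, natDegree_pos_iff_degree_pos]
    exact degree_pos_of_root (map_ne_zero hp) hx
  have hp' : derivative p ≠ 0 ∧ (derivative p).natDegree < p.natDegree :=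
    ⟨fun h ↦ hdeg (derivative_eq_zero.mp h), natDegree_derivative_lt hdeg⟩
  obtain ⟨M, hM⟩ := exists_abs_lt_of_isRoot_map hi hp hx
  obtain ⟨a₀, b₀, hx₀, -, hp'₀⟩ := exists_Ioo_forall_not_isRoot_map hi hi' hroots hroots' hxi hM ∅
    (F := {derivative p}) (by simpa using hp')
  obtain ⟨hp'R, hp'R'⟩ := hp'₀ _ (Finset.mem_singleton_self _)
  obtain ⟨x', hx', hpx'⟩ := hR.exists_isRoot_map_mem_Ioo hR' hi hi' hx₀ hx hp'R
  refine ⟨x', fun f ↦ ?_⟩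
  rw [← eval_map_mod_of_isRoot_map i hx, ← eval_map_mod_of_isRoot_map i' hpx']
  rcases eq_or_ne (f % p) 0 with hg | hg
  · simp only [hg, Polynomial.map_zero, eval_zero, sign_zero]
  obtain ⟨a, b, hxab, hab, hroot⟩ := exists_Ioo_forall_not_isRoot_map hi hi' hroots hroots' hxi hM
    {a₀, b₀} (F := {derivative p, f % p})
    (by
      simp only [Finset.mem_insert, Finset.mem_singleton, forall_eq_or_imp, forall_eq]
      exact ⟨hp', hg, natDegree_mod_lt f hdeg⟩)
  simp only [Finset.mem_insert, Finset.mem_singleton, forall_eq_or_imp, forall_eq] at hab hroot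
  obtain ⟨y, hy, hpy⟩ := hR.exists_isRoot_map_mem_Ioo hR' hi hi' hxab hx hroot.1.1
  have hy₀ : y ∈ Set.Ioo (i' a₀) (i' b₀) := by
    have ha := le_of_not_gt fun h ↦ hab.1 ⟨h, hi.lt_iff_lt.mp (hx₀.1.trans hxab.2)⟩
    have hb := le_of_not_gt fun h ↦ hab.2 ⟨hi.lt_iff_lt.mp (hxab.1.trans hx₀.2), h⟩
    exact ⟨(hi'.monotone ha).trans_lt hy.1, hy.2.trans_le (hi'.monotone hb)⟩
  obtain rfl : y = x' :=
    hR'.eq_of_isRoot_of_isRoot (by rwa [derivative_map]) hy₀ hx' hpy hpx'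
  exact sign_eval_map_eq_of_mem_Ioo hR hR' hi hi' hxab hy hroot.2.1 hroot.2.2

theorem rootsMemRange_of_isMaximalCommonSubfield (hR : PolynomialIVP R) (hR' : PolynomialIVP R')
    (hi : StrictMono i) (hi' : StrictMono i') (hmax : IsMaximalCommonSubfield i i') (n : ℕ) :
    RootsMemRange i n ∧ RootsMemRange i' n := by
  induction n using Nat.strong_induction_on with
  | h n ih =>
    refine ⟨fun p hp hdeg x hx ↦ ?_, fun p hp hdeg x' hx' ↦ ?_⟩ <;> by_contra hxi
    · obtain ⟨x', hsign⟩ := exists_sign_eval_map_eq_of_isRoot hR hR' hi hi' hp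
        (ih _ hdeg).1 (ih _ hdeg).2 hx hxi
      obtain ⟨k, hk, -⟩ := hmax x x' hsign
      exact hxi ⟨k, hk⟩
    · obtain ⟨x, hsign⟩ := exists_sign_eval_map_eq_of_isRoot hR' hR hi' hi hp
        (ih _ hdeg).2 (ih _ hdeg).1 hx' hxi
      obtain ⟨k, -, hk⟩ := hmax x x' fun f ↦ (hsign f).symm
      exact hxi ⟨k, hk⟩

theorem exists_sign_eval_eq_of_isMaximalCommonSubfield (hR : PolynomialIVP R)
    (hR' : PolynomialIVP R') (hi : StrictMono i) (hi' : StrictMono i')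
    (hmax : IsMaximalCommonSubfield i i') (x : R) (F : Finset K[X]) :
    ∃ x', ∀ f ∈ F, SignType.sign ((f.map i).eval x) = SignType.sign ((f.map i').eval x') := by
  classical
  by_cases hx : x ∈ Set.range i
  · obtain ⟨k, rfl⟩ := hx
    exact ⟨i' k, fun f _ ↦ by
      rw [eval_map_apply, eval_map_apply, hi.sign_comp, hi'.sign_comp]⟩
  let Z := F.biUnion fun f ↦ f.roots.toFinset
  obtain ⟨m, hm, hm'⟩ := Order.exists_between_finsets (Z.filter (i · < x)) (Z.filter (x < i ·))
    fun a ha b hb ↦ hi.lt_iff_lt.mp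
      ((Finset.mem_filter.mp ha).2.trans (Finset.mem_filter.mp hb).2)
  refine ⟨i' m, fun f hf ↦ ?_⟩
  rw [eval_map_apply, hi'.sign_comp]
  rcases eq_or_ne f 0 with rfl | hf₀
  · simp only [Polynomial.map_zero, eval_zero, sign_zero]
  refine hR.sign_eval_map_eq hi fun c hc hcf ↦ ?_
  obtain ⟨z, rfl⟩ := (rootsMemRange_of_isMaximalCommonSubfield hR hR' hi hi' hmax _).1 f hf₀
    (Nat.lt_succ_self _) c hcf
  have hz : z ∈ Z := Finset.mem_biUnion.mpr ⟨f, hf, Multiset.mem_toFinset.mpr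
    ((mem_roots hf₀).mpr ((isRoot_map_iff i.injective).mp hcf))⟩
  rcases lt_trichotomy (i z) x with hlt | heq | hlt
  · have := hi (hm z (Finset.mem_filter.mpr ⟨hz, hlt⟩))
    exact (Set.mem_uIcc.mp hc).elim (fun h ↦ h.1.not_gt hlt) fun h ↦ h.1.not_gt this
  · exact hx ⟨z, heq⟩
  · have := hi (hm' z (Finset.mem_filter.mpr ⟨hz, hlt⟩))
    exact (Set.mem_uIcc.mp hc).elim (fun h ↦ h.2.not_gt this) fun h ↦ h.2.not_gt hlt

end Realisation

section MaximalCommonSubfield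

universe v w

variable {R : Type v} {R' : Type w} [Field R] [LinearOrder R] [Field R'] [LinearOrder R']

/-- A subring of `R × R'` on which the two coordinates have the same sign, that is, the graph of
an isomorphism between ordered subrings of `R` and `R'`. -/
def HasEqualSigns (S : Subring (R × R')) : Prop :=
  ∀ z ∈ S, SignType.sign z.1 = SignType.sign z.2

theorem HasEqualSigns.exists_maximal_ge {S : Subring (R × R')} (hS : HasEqualSigns S) :
    ∃ T, S ≤ T ∧ Maximal HasEqualSigns T := by
  refine zorn_le_nonempty₀ {T | HasEqualSigns T} (fun c hc hchain T₀ hT₀ ↦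
    ⟨sSup c, fun z hz ↦ ?_, fun _ ↦ le_sSup⟩) S hS
  obtain ⟨T, hT, hzT⟩ := (Subring.mem_sSup_of_directedOn ⟨T₀, hT₀⟩ hchain.directedOn).mp hz
  exact hc hT z hzT

theorem mem_of_maximal_hasEqualSigns {S : Subring (R × R')} (hS : Maximal HasEqualSigns S)
    {z : R × R'} (hz : ∀ f : S[X], SignType.sign (f.eval₂ S.subtype z).1 =
      SignType.sign (f.eval₂ S.subtype z).2) : z ∈ S := by
  let T : Subring (R × R') := (eval₂RingHom S.subtype z).range
  have hT : HasEqualSigns T := by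
    rintro _ ⟨f, rfl⟩
    exact hz f
  have hST : S ≤ T := fun s hs ↦ ⟨C ⟨s, hs⟩, by simp⟩
  exact hS.2 hT hST ⟨X, by simp⟩

theorem isMaximalCommonSubfield_of_maximal_hasEqualSigns {S : Subring (R × R')}
    (hS : Maximal HasEqualSigns S) {K : Type*} [Field K] (e : K ≃+* S) :
    IsMaximalCommonSubfield ((RingHom.fst R R').comp (S.subtype.comp (e : K →+* S)))
      ((RingHom.snd R R').comp (S.subtype.comp (e : K →+* S))) := by
  intro x x' h
  have hmem : (x, x') ∈ S := mem_of_maximal_hasEqualSigns hS fun f ↦ by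
    obtain ⟨g, rfl⟩ := map_surjective (e : K →+* S) e.surjective f
    rw [eval₂_map, ← RingHom.coe_fst, ← RingHom.coe_snd, hom_eval₂, hom_eval₂,
      eval₂_eq_eval_map, eval₂_eq_eval_map]
    exact h g
  refine ⟨e.symm ⟨(x, x'), hmem⟩, ?_, ?_⟩ <;>
    simp only [RingHom.comp_apply, RingHom.coe_coe, RingEquiv.apply_symm_apply] <;> rfl

theorem HasEqualSigns.fst_eq_zero_iff {S : Subring (R × R')} (hS : HasEqualSigns S)
    {z : R × R'} (hz : z ∈ S) : z.1 = 0 ↔ z.2 = 0 := by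
  rw [← sign_eq_zero_iff, hS z hz, sign_eq_zero_iff]

variable [IsStrictOrderedRing R] [IsStrictOrderedRing R']

theorem HasEqualSigns.fst_lt_fst_iff {S : Subring (R × R')} (hS : HasEqualSigns S)
    {z w : R × R'} (hz : z ∈ S) (hw : w ∈ S) : z.1 < w.1 ↔ z.2 < w.2 := by
  have hsign := hS _ (sub_mem hw hz)
  rw [← sub_pos, ← sub_pos (a := w.2), ← sign_eq_one_iff, ← sign_eq_one_iff]
  exact (congrArg (· = 1) hsign).to_iff

theorem sign_inv₀ (x : R) : SignType.sign x⁻¹ = SignType.sign x := by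
  rcases lt_trichotomy x 0 with h | rfl | h
  · rw [sign_neg h, sign_neg (inv_lt_zero.mpr h)]
  · rw [inv_zero]
  · rw [sign_pos h, sign_pos (inv_pos.mpr h)]

theorem exists_mul_eq_one_of_maximal_hasEqualSigns {S : Subring (R × R')}
    (hS : Maximal HasEqualSigns S) {z : R × R'} (hz : z ∈ S) (hz₀ : z ≠ 0) :
    ∃ w ∈ S, z * w = 1 := by
  have hfst : z.1 ≠ 0 := fun h ↦ hz₀ (Prod.ext h ((hS.1.fst_eq_zero_iff hz).mp h))
  have hsnd : z.2 ≠ 0 := fun h ↦ hz₀ (Prod.ext ((hS.1.fst_eq_zero_iff hz).mpr h) h)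
  let w : R × R' := (z.1⁻¹, z.2⁻¹)
  have hzw : z * w = 1 := Prod.ext (mul_inv_cancel₀ hfst) (mul_inv_cancel₀ hsnd)
  refine ⟨w, mem_of_maximal_hasEqualSigns hS fun f ↦ ?_, hzw⟩
  let _ : Invertible w := ⟨z, hzw, by rw [mul_comm, hzw]⟩
  have hrev : f.reverse.eval₂ S.subtype z ∈ S := by
    rw [show z = S.subtype ⟨z, hz⟩ from rfl, eval₂_hom]
    exact SetLike.coe_mem _
  have hw : SignType.sign w.1 = SignType.sign w.2 := by
    rw [sign_inv₀, sign_inv₀, hS.1 z hz]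
  rw [← eval₂_reverse_mul_pow S.subtype w f, Prod.fst_mul, Prod.snd_mul, Prod.pow_fst,
    Prod.pow_snd, sign_mul, sign_mul, sign_pow, sign_pow, hw]
  exact congrArg (· * _) (hS.1 _ hrev)

theorem isField_of_maximal_hasEqualSigns {S : Subring (R × R')}
    (hS : Maximal HasEqualSigns S) : IsField S := by
  refine ⟨⟨0, 1, fun h ↦ zero_ne_one (congrArg (·.1.1) h)⟩, mul_comm, fun {z} hz ↦ ?_⟩
  obtain ⟨w, hw, hzw⟩ := exists_mul_eq_one_of_maximal_hasEqualSigns hS z.2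
    fun h ↦ hz (Subtype.ext h)
  exact ⟨⟨w, hw⟩, Subtype.ext hzw⟩

theorem exists_isMaximalCommonSubfield {B : Type*} [CommRing B] {φ : B →+* R} {ψ : B →+* R'}
    (hφψ : ∀ b, SignType.sign (φ b) = SignType.sign (ψ b)) :
    ∃ (K : Type (max v w)) (_ : Field K) (_ : LinearOrder K) (_ : IsStrictOrderedRing K)
      (i : K →+* R) (i' : K →+* R') (j : B →+* K), StrictMono i ∧ StrictMono i' ∧
        i.comp j = φ ∧ i'.comp j = ψ ∧ IsMaximalCommonSubfield i i' := by
  have hrange : HasEqualSigns (φ.prod ψ).range := by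
    rintro _ ⟨b, rfl⟩
    exact hφψ b
  obtain ⟨S, hle, hS⟩ := hrange.exists_maximal_ge
  -- A copy of `S`, since `S` itself carries the product order.
  obtain ⟨K, _, ⟨e⟩⟩ : ∃ (K : Type (max v w)) (_ : Field K), Nonempty (K ≃+* S) :=
    ⟨S, (isField_of_maximal_hasEqualSigns hS).toField, ⟨RingEquiv.refl _⟩⟩
  let ι : K →+* R × R' := S.subtype.comp e
  let i : K →+* R := (RingHom.fst R R').comp ι
  let i' : K →+* R' := (RingHom.snd R R').comp ι
  let _ : LinearOrder K := LinearOrder.lift' i i.injective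
  have hi : StrictMono i := fun _ _ h ↦ h
  have hi' : StrictMono i' := fun z w h ↦ (hS.1.fst_lt_fst_iff (e z).2 (e w).2).mp h
  have : IsStrictOrderedRing K := Function.Injective.isStrictOrderedRing i (map_zero i)
    (map_one i) (map_add i) (map_mul i) Iff.rfl Iff.rfl
  let j : B →+* K := (e.symm : S →+* K).comp ((φ.prod ψ).codRestrict S fun b ↦ hle ⟨b, rfl⟩)
  have hιj : ι.comp j = φ.prod ψ := by
    ext1 b
    simp only [ι, j, RingHom.comp_apply, RingHom.coe_coe, RingEquiv.apply_symm_apply]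
    rfl
  exact ⟨K, inferInstance, inferInstance, this, i, i', j, hi, hi',
    by rw [RingHom.comp_assoc, hιj, RingHom.fst_comp_prod],
    by rw [RingHom.comp_assoc, hιj, RingHom.snd_comp_prod],
    isMaximalCommonSubfield_of_maximal_hasEqualSigns hS e⟩

theorem exists_sign_eval_map_eq {B : Type*} [CommRing B] (hR : PolynomialIVP R)
    (hR' : PolynomialIVP R') {φ : B →+* R} {ψ : B →+* R'}
    (hφψ : ∀ b, SignType.sign (φ b) = SignType.sign (ψ b)) (x : R) (F : Finset B[X]) :
    ∃ x', ∀ f ∈ F, SignType.sign ((f.map φ).eval x) = SignType.sign ((f.map ψ).eval x') := by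
  classical
  obtain ⟨K, _, _, _, i, i', j, hi, hi', rfl, rfl, hmax⟩ := exists_isMaximalCommonSubfield hφψ
  obtain ⟨x', hx'⟩ := exists_sign_eval_eq_of_isMaximalCommonSubfield hR hR' hi hi' hmax x
    (F.image (Polynomial.map j))
  refine ⟨x', fun f hf ↦ ?_⟩
  simpa only [Polynomial.map_map] using hx' _ (Finset.mem_image_of_mem _ hf)

end MaximalCommonSubfield

end SignTransfer

section Transfer

open Polynomial Filter

section Ultrapower

variable {ι R : Type*} (U : Ultrafilter ι) [Field R]

theorem eval_map_coeRingHom (p : (ι → R)[X]) (f : ι → R) :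
    (p.map (Germ.coeRingHom (U : Filter ι))).eval (f : Germ (U : Filter ι) R) =
      ((fun i ↦ (p.map (Pi.evalRingHom _ i)).eval (f i) : ι → R) : Germ (U : Filter ι) R) := by
  refine (eval_map_apply (Germ.coeRingHom (U : Filter ι)) f).trans (congrArg _ ?_)
  ext i
  exact (eval_map_apply (Pi.evalRingHom (fun _ ↦ R) i) f).symm

variable [LinearOrder R]

theorem sign_germ_eq_iff {f : ι → R} {s : SignType} :
    SignType.sign (f : Germ (U : Filter ι) R) = s ↔ ∀ᶠ i in U, SignType.sign (f i) = s := by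
  cases s
  · simp only [SignType.zero_eq_zero, sign_eq_zero_iff]
    exact Germ.coe_eq
  · simp only [SignType.neg_eq_neg_one, sign_eq_neg_one_iff]
    exact Germ.coe_lt
  · simp only [SignType.pos_eq_one, sign_eq_one_iff]
    exact Germ.coe_pos

theorem PolynomialIVP.germ (hR : PolynomialIVP R) :
    PolynomialIVP (Germ (U : Filter ι) R) := by
  intro p a b
  refine Germ.inductionOn₂ a b fun f g hfg hneg ↦ ?_
  obtain ⟨P, rfl⟩ := map_surjective (Germ.coeRingHom (U : Filter ι))
    (fun z ↦ Germ.inductionOn z fun f ↦ ⟨f, rfl⟩) p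
  rw [eval_map_coeRingHom, eval_map_coeRingHom] at hneg
  obtain ⟨c, hc⟩ := ((Germ.coe_lt.mp hfg).and (Germ.coe_lt.mp hneg)).mono
    (fun i hi ↦ hR (P.map (Pi.evalRingHom _ i)) _ _ hi.1 hi.2) |>.choice
  refine ⟨c, ⟨Germ.coe_lt.mpr (hc.mono fun i hi ↦ hi.1.1),
    Germ.coe_lt.mpr (hc.mono fun i hi ↦ hi.1.2)⟩, ?_⟩
  rw [IsRoot, eval_map_coeRingHom]
  exact Germ.coe_eq.mpr (hc.mono fun i hi ↦ hi.2)

end Ultrapower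

/-- Tarski–Seidenberg transfer of sign conditions from `R` to `R'`, for rings over `B`: finitely
many sign conditions on elements of `B` that some homomorphism `B →+* R` satisfies are satisfied
by some homomorphism `B →+* R'`. -/
def TransfersSigns (R R' B : Type*) [Field R] [LinearOrder R] [Field R'] [LinearOrder R']
    [CommRing B] : Prop :=
  ∀ (φ : B →+* R) (F : Finset B), ∃ ψ : B →+* R',
    ∀ b ∈ F, SignType.sign (φ b) = SignType.sign (ψ b)

variable {R R' B : Type*} [Field R] [LinearOrder R] [Field R'] [LinearOrder R'] [CommRing B]

-- The homomorphisms given by the finite subsets of `B` combine to one into an ultrapower of `R'`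
-- that has all the signs of the given one.
theorem TransfersSigns.polynomial [IsStrictOrderedRing R] [IsStrictOrderedRing R']
    (hR : PolynomialIVP R) (hR' : PolynomialIVP R') (h : TransfersSigns R R' B) :
    TransfersSigns R R' B[X] := by
  intro φ F
  choose ψ hψ using h (φ.comp C)
  let U : Ultrafilter (Finset B) := Ultrafilter.of atTop
  let Ψ : B →+* Germ (U : Filter (Finset B)) R' :=
    (Germ.coeRingHom (U : Filter (Finset B))).comp (RingHom.pi ψ)
  have hΨ (b : B) : SignType.sign (φ.comp C b) = SignType.sign (Ψ b) :=
    ((sign_germ_eq_iff U).mpr <| (eventually_ge_atTop {b}).filter_mono (Ultrafilter.of_le _)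
      |>.mono fun G hG ↦ (hψ G b (hG (Finset.mem_singleton_self b))).symm).symm
  obtain ⟨x, hx⟩ := exists_sign_eval_map_eq hR (hR'.germ U) hΨ (φ X) F
  induction x using Germ.inductionOn with | h ξ => ?_
  have hev : ∀ᶠ G in U, ∀ f ∈ F, SignType.sign (((f.map (ψ G)).eval (ξ G))) =
      SignType.sign (φ f) := by
    refine (eventually_all_finset F).mpr fun f hf ↦ (sign_germ_eq_iff U).mp ?_
    have hφ : (f.map (φ.comp C)).eval (φ X) = φ f := by
      rw [← Polynomial.map_map, eval_map_apply, ← Polynomial.eval₂_eq_eval_map, eval₂_C_X]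
    rw [← hφ, hx f hf, ← Polynomial.map_map, eval_map_coeRingHom]
    simp only [Polynomial.map_map]
    rfl
  obtain ⟨G, hG⟩ := hev.exists
  exact ⟨eval₂RingHom (ψ G) (ξ G), fun f hf ↦ by
    rw [coe_eval₂RingHom, ← eval_map, hG f hf]⟩

theorem TransfersSigns.of_surjective {B' : Type*} [CommRing B'] [IsNoetherianRing B]
    (h : TransfersSigns R R' B) {π : B →+* B'} (hπ : Function.Surjective π) :
    TransfersSigns R R' B' := by
  classical
  intro φ F
  obtain ⟨S, hS⟩ := (isNoetherianRing_iff_ideal_fg B).mp inferInstance (RingHom.ker π)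
  choose g hg using hπ
  obtain ⟨ψ, hψ⟩ := h (φ.comp π) (S ∪ F.image g)
  have hker : RingHom.ker π ≤ RingHom.ker ψ := by
    refine hS ▸ Ideal.span_le.mpr fun s hs ↦ ?_
    have hπs : π s = 0 := hS.le (Ideal.subset_span hs)
    have hsign := hψ s (Finset.mem_union_left _ hs)
    rw [RingHom.comp_apply, hπs, map_zero, sign_zero] at hsign
    exact sign_eq_zero_iff.mp hsign.symm
  refine ⟨RingHom.liftOfRightInverse π g hg ⟨ψ, hker⟩, fun b hb ↦ ?_⟩
  have hsign := hψ (g b) (Finset.mem_union_right _ (Finset.mem_image_of_mem _ hb))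
  rw [RingHom.comp_apply, hg] at hsign
  exact hsign

section Real

theorem polynomialIVP_real : PolynomialIVP ℝ := by
  intro p a b hab hneg
  have hcont : ContinuousOn (p.eval ·) (Set.Icc a b) := p.continuous.continuousOn
  rcases mul_neg_iff.mp hneg with ⟨ha, hb⟩ | ⟨ha, hb⟩
  · exact intermediate_value_Ioo' hab.le hcont ⟨hb, ha⟩
  · exact intermediate_value_Ioo hab.le hcont ⟨ha, hb⟩

variable [IsStrictOrderedRing R]

theorem strictMono_ringHom_real (φ : ℝ →+* R) : StrictMono φ := by
  refine Monotone.strictMono_of_injective (fun x y hxy ↦ ?_) φ.injective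
  rw [← sub_nonneg, ← map_sub, ← Real.sq_sqrt (sub_nonneg.mpr hxy), map_pow]
  positivity

theorem transfersSigns_real : TransfersSigns R ℝ ℝ := fun φ _ ↦
  ⟨RingHom.id ℝ, fun _ _ ↦ (strictMono_ringHom_real φ).sign_comp _⟩

theorem transfersSigns_mvPolynomial (hR : PolynomialIVP R) (n : ℕ) :
    TransfersSigns R ℝ (MvPolynomial (Fin n) ℝ) := by
  induction n with
  | zero =>
    exact transfersSigns_real.of_surjective
      (π := ((MvPolynomial.isEmptyRingEquiv ℝ (Fin 0)).symm : ℝ →+* _))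
      (MvPolynomial.isEmptyRingEquiv ℝ (Fin 0)).symm.surjective
  | succ n ih =>
    exact (ih.polynomial hR polynomialIVP_real).of_surjective
      (π := ((MvPolynomial.finSuccEquiv ℝ n).symm.toRingEquiv : _ →+* _))
      (MvPolynomial.finSuccEquiv ℝ n).symm.surjective

theorem transfersSigns_of_finiteType {A : Type*} [CommRing A] [Algebra ℝ A]
    (hA : Algebra.FiniteType ℝ A) (hR : PolynomialIVP R) : TransfersSigns R ℝ A := by
  obtain ⟨n, π, hπ⟩ := Algebra.FiniteType.iff_quotient_mvPolynomial''.mp hA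
  exact (transfersSigns_mvPolynomial hR n).of_surjective (π := π.toRingHom) hπ

end Real

end Transfer

section Positivstellensatz

variable {A : Type*} [CommRing A] {S : Set A}

theorem IsInPreordering.zero : IsInPreordering S 0 :=
  zero_pow (M₀ := A) two_ne_zero ▸ .sq 0

theorem IsInPreordering.one : IsInPreordering S 1 :=
  one_pow (M := A) 2 ▸ .sq 1

theorem IsInPreordering.mono {S' : Set A} (h : S ⊆ S') {a : A} (ha : IsInPreordering S a) :
    IsInPreordering S' a := by
  induction ha with
  | sq a => exact .sq a
  | gen hs => exact .gen (h hs)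
  | add _ _ ha hb => exact ha.add hb
  | mul _ _ ha hb => exact ha.mul hb

theorem IsInPreordering.exists_eq_add_mul_of_insert {g a : A}
    (ha : IsInPreordering (insert g S) a) :
    ∃ t u, IsInPreordering S t ∧ IsInPreordering S u ∧ a = t + g * u := by
  induction ha with
  | sq a => exact ⟨a ^ 2, 0, .sq a, .zero, by ring⟩
  | gen hs =>
    rcases hs with rfl | hs
    · exact ⟨0, 1, .zero, .one, by ring⟩
    · exact ⟨_, 0, .gen hs, .zero, by ring⟩
  | add _ _ ha hb =>
    obtain ⟨t, u, ht, hu, rfl⟩ := ha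
    obtain ⟨t', u', ht', hu', rfl⟩ := hb
    exact ⟨t + t', u + u', ht.add ht', hu.add hu', by ring⟩
  | mul _ _ ha hb =>
    obtain ⟨t, u, ht, hu, rfl⟩ := ha
    obtain ⟨t', u', ht', hu', rfl⟩ := hb
    exact ⟨t * t' + g ^ 2 * (u * u'), t * u' + u * t',
      (ht.mul ht').add ((IsInPreordering.sq g).mul (hu.mul hu')),
      (ht.mul hu').add (hu.mul ht'), by ring⟩

variable [Algebra ℝ A]

theorem mem_kSet_iff {χ : A →ₐ[ℝ] ℝ} : χ ∈ KSet S ↔ ∀ s ∈ S, 0 ≤ χ s := by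
  refine ⟨fun h s hs ↦ h s (.gen hs), fun h a ha ↦ ?_⟩
  induction ha with
  | sq a => rw [map_pow]; positivity
  | gen hs => exact h _ hs
  | add _ _ ha hb => rw [map_add]; positivity
  | mul _ _ ha hb => rw [map_mul]; positivity

theorem nonempty_kSet_of_not_isInPreordering_neg_one (hA : Algebra.FiniteType ℝ A)
    (hS : S.Finite) (h : ¬ IsInPreordering S (-1)) : (KSet S).Nonempty := by
  obtain ⟨R, _, _, _, θ, hR, hθ⟩ := exists_ringHom_nonneg_of_ringPreordering
    (.mk' {a | IsInPreordering S a} .add .mul (fun a ↦ sq a ▸ .sq a) h)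
  obtain ⟨ψ, hψ⟩ := transfersSigns_of_finiteType hA hR θ hS.toFinset
  have hψℝ : ψ.comp (algebraMap ℝ A) = RingHom.id ℝ := Subsingleton.elim _ _
  refine ⟨{ ψ with commutes' := RingHom.congr_fun hψℝ }, mem_kSet_iff.mpr fun s hs ↦ ?_⟩
  change 0 ≤ ψ s
  rw [← sign_nonneg_iff, ← hψ s (hS.mem_toFinset.mpr hs), sign_nonneg_iff]
  exact hθ s (.gen hs)

theorem exists_mul_eq_one_add_of_forall_pos (hA : Algebra.FiniteType ℝ A) (hS : S.Finite) {g : A}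
    (hg : ∀ χ ∈ KSet S, 0 < χ g) :
    ∃ p q, IsInPreordering S p ∧ IsInPreordering S q ∧ g * p = 1 + q := by
  have hneg : IsInPreordering (insert (-g) S) (-1) := by
    by_contra hneg
    obtain ⟨χ, hχ⟩ := nonempty_kSet_of_not_isInPreordering_neg_one hA (hS.insert _) hneg
    have hχg : 0 ≤ χ (-g) := hχ _ (.gen (Set.mem_insert _ _))
    rw [map_neg, neg_nonneg] at hχg
    exact hχg.not_gt (hg χ fun a ha ↦ hχ a (ha.mono (Set.subset_insert _ _)))
  obtain ⟨t, u, ht, hu, htu⟩ := hneg.exists_eq_add_mul_of_insert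
  exact ⟨u, t, hu, ht, by linear_combination htu⟩

end Positivstellensatz

section PositiveFunctional

section Growth

variable {s : ℕ → ℝ}

theorem pow_mul_le_of_sq_le_mul (hpos : ∀ n, 0 ≤ s n) (hs : ∀ n, s (n + 1) ^ 2 ≤ s n * s (n + 2))
    {r : ℝ} (hr : 0 ≤ r) (h : r * s 0 < s 1) (n : ℕ) : r ^ n * s 0 ≤ s n := by
  have hratio (n : ℕ) : 0 < s (n + 1) ∧ r * s n ≤ s (n + 1) := by
    induction n with
    | zero => exact ⟨(mul_nonneg hr (hpos 0)).trans_lt h, h.le⟩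
    | succ n ih =>
      obtain ⟨hpos₁, hle⟩ := ih
      have hprod : 0 < s n * s (n + 2) := (pow_pos hpos₁ 2).trans_le (hs n)
      have hpos₀ : 0 < s n := pos_of_mul_pos_left hprod (hpos _)
      refine ⟨pos_of_mul_pos_right hprod hpos₀.le, le_of_mul_le_mul_left ?_ hpos₀⟩
      calc s n * (r * s (n + 1)) = r * s n * s (n + 1) := by ring
        _ ≤ s (n + 1) * s (n + 1) := by gcongr
        _ ≤ s n * s (n + 2) := by rw [← sq]; exact hs n
  induction n with
  | zero => rw [pow_zero, one_mul]
  | succ n ih =>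
    rw [pow_succ', mul_assoc]
    exact (mul_le_mul_of_nonneg_left ih hr).trans (hratio n).2

theorem le_mul_of_sq_le_mul_of_le_mul_pow (hpos : ∀ n, 0 ≤ s n)
    (hs : ∀ n, s (n + 1) ^ 2 ≤ s n * s (n + 2)) {N C : ℝ} (hN : 0 < N)
    (hbound : ∀ n, s n ≤ C * N ^ n) : s 1 ≤ N * s 0 := by
  by_contra! h
  have hs₀ : 0 < s 0 := by
    have hs₁ : 0 < s 1 := (mul_nonneg hN.le (hpos 0)).trans_lt h
    exact pos_of_mul_pos_left ((pow_pos hs₁ 2).trans_le (hs 0)) (hpos _)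
  obtain ⟨r, hNr, hr⟩ := exists_between ((lt_div_iff₀ hs₀).mpr h)
  have hr₀ : 0 < r := hN.trans hNr
  obtain ⟨n, hn⟩ := pow_unbounded_of_one_lt (C / s 0) ((one_lt_div hN).mpr hNr)
  have hgrowth := pow_mul_le_of_sq_le_mul hpos hs hr₀.le ((lt_div_iff₀ hs₀).mp hr) n
  rw [div_pow, div_lt_div_iff₀ hs₀ (pow_pos hN n)] at hn
  exact (hn.trans_le hgrowth).not_ge (hbound n)

end Growth

variable {A : Type*} [CommRing A] [Algebra ℝ A]

theorem sq_apply_mul_le_of_forall_sq_nonneg {L : A →ₗ[ℝ] ℝ} (hL : ∀ a, 0 ≤ L (a ^ 2)) (u v : A) :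
    L (u * v) ^ 2 ≤ L (u ^ 2) * L (v ^ 2) := by
  have hquad (x : ℝ) : 0 ≤ L (u ^ 2) * (x * x) + 2 * L (u * v) * x + L (v ^ 2) := by
    have hsq : (x • u + v) ^ 2 = (x * x) • u ^ 2 + (2 * x) • (u * v) + v ^ 2 := by
      simp only [Algebra.smul_def, map_mul, map_ofNat]
      ring
    have := hL (x • u + v)
    rw [hsq, map_add, map_add, map_smul, map_smul, smul_eq_mul, smul_eq_mul] at this
    linarith
  have hdiscrim := discrim_le_zero hquad
  rw [discrim] at hdiscrim
  linarith

/-- `L` is nonnegative on the preordering generated by `S`. -/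
def IsPositiveOn (S : Set A) (L : A →ₗ[ℝ] ℝ) : Prop :=
  ∀ a, IsInPreordering S a → 0 ≤ L a

namespace IsPositiveOn

variable {S : Set A} {L : A →ₗ[ℝ] ℝ}

theorem sq_apply_mul_le (hL : IsPositiveOn S L) (u v : A) :
    L (u * v) ^ 2 ≤ L (u ^ 2) * L (v ^ 2) :=
  sq_apply_mul_le_of_forall_sq_nonneg (fun a ↦ hL _ (.sq a)) u v

theorem comp_mulLeft (hL : IsPositiveOn S L) {t : A} (ht : IsInPreordering S t) :
    IsPositiveOn S (L ∘ₗ LinearMap.mulLeft ℝ t) :=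
  fun _ ha ↦ hL _ (ht.mul ha)

theorem apply_pow_sq_add_le (hL : IsPositiveOn S L) {b p q : A} {N : ℝ}
    (hq : IsInPreordering S q) (hpq : (algebraMap ℝ A N - b ^ 2) * p = 1 + q) (n : ℕ) :
    L ((b ^ n) ^ 2) + L ((b ^ (n + 1)) ^ 2 * p) ≤ N * L ((b ^ n) ^ 2 * p) := by
  have hsplit : N • ((b ^ n) ^ 2 * p) =
      (b ^ n) ^ 2 + (b ^ (n + 1)) ^ 2 * p + (b ^ n) ^ 2 * q := by
    rw [Algebra.smul_def]
    linear_combination (b ^ n) ^ 2 * hpq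
  rw [← smul_eq_mul N, ← map_smul, hsplit, map_add, map_add]
  exact le_add_of_nonneg_right (hL _ ((IsInPreordering.sq _).mul hq))

-- The moments `L (b ^ (2 * n))` are logarithmically convex and, by the Positivstellensatz applied
-- to `N - b ^ 2`, they grow at most like `N ^ n`.
theorem apply_sq_le_of_forall_sq_lt (hL : IsPositiveOn S L) (hA : Algebra.FiniteType ℝ A)
    (hS : S.Finite) {b : A} {N : ℝ} (hN : 0 < N) (hb : ∀ χ ∈ KSet S, χ b ^ 2 < N) :
    L (b ^ 2) ≤ N * L 1 := by
  obtain ⟨p, q, hp, hq, hpq⟩ :=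
    exists_mul_eq_one_add_of_forall_pos hA hS (g := algebraMap ℝ A N - b ^ 2) fun χ hχ ↦ by
      rw [map_sub, map_pow, AlgHom.commutes, Algebra.algebraMap_self_apply, sub_pos]
      exact hb χ hχ
  have hrec (n : ℕ) := hL.apply_pow_sq_add_le hq hpq n
  have hsq (n : ℕ) : 0 ≤ L ((b ^ n) ^ 2) := hL _ (.sq _)
  have hpn (n : ℕ) : 0 ≤ L ((b ^ n) ^ 2 * p) := hL _ ((IsInPreordering.sq _).mul hp)
  have hgrowth (n : ℕ) : L ((b ^ n) ^ 2 * p) ≤ L p * N ^ n := by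
    induction n with
    | zero => simp only [pow_zero, one_pow, one_mul, mul_one, le_refl]
    | succ n ih =>
      calc L ((b ^ (n + 1)) ^ 2 * p) ≤ N * L ((b ^ n) ^ 2 * p) := by linarith [hrec n, hsq n]
        _ ≤ N * (L p * N ^ n) := by gcongr
        _ = L p * N ^ (n + 1) := by ring
  have hlogconvex (n : ℕ) :
      L ((b ^ (n + 1)) ^ 2) ^ 2 ≤ L ((b ^ n) ^ 2) * L ((b ^ (n + 2)) ^ 2) := by
    rw [show (b ^ (n + 1)) ^ 2 = b ^ n * b ^ (n + 2) by ring]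
    exact hL.sq_apply_mul_le _ _
  have hbound (n : ℕ) : L ((b ^ n) ^ 2) ≤ N * L p * N ^ n :=
    calc L ((b ^ n) ^ 2) ≤ N * L ((b ^ n) ^ 2 * p) := by linarith [hrec n, hpn (n + 1)]
      _ ≤ N * (L p * N ^ n) := by gcongr; exact hgrowth n
      _ = N * L p * N ^ n := by ring
  simpa only [pow_one, pow_zero, one_pow] using
    le_mul_of_sq_le_mul_of_le_mul_pow hsq hlogconvex hN hbound

theorem apply_sq_le (hL : IsPositiveOn S L) (hA : Algebra.FiniteType ℝ A) (hS : S.Finite)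
    {b : A} {C : ℝ} (hb : ∀ χ ∈ KSet S, |χ b| ≤ C) : L (b ^ 2) ≤ C ^ 2 * L 1 := by
  have hlim : Filter.Tendsto (· * L 1) (nhdsWithin (C ^ 2) (Set.Ioi (C ^ 2)))
      (nhds (C ^ 2 * L 1)) :=
    ((continuous_mul_const (L 1)).tendsto _).mono_left nhdsWithin_le_nhds
  refine ge_of_tendsto hlim (eventually_mem_nhdsWithin.mono fun N hN ↦ ?_)
  refine hL.apply_sq_le_of_forall_sq_lt hA hS ((sq_nonneg C).trans_lt hN) fun χ hχ ↦ ?_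
  exact (sq_le_sq.mpr ((hb χ hχ).trans (le_abs_self C))).trans_lt hN

theorem abs_apply_mul_le (hL : IsPositiveOn S L) (hA : Algebra.FiniteType ℝ A) (hS : S.Finite)
    {b : A} {C : ℝ} (hC : 0 ≤ C) (hb : ∀ χ ∈ KSet S, |χ b| ≤ C) {t : A}
    (ht : IsInPreordering S t) : |L (t * b)| ≤ C * L t := by
  have hsq := (hL.comp_mulLeft ht).apply_sq_le hA hS hb
  have hcs := (hL.comp_mulLeft ht).sq_apply_mul_le 1 b
  simp only [LinearMap.comp_apply, LinearMap.mulLeft_apply, one_pow, one_mul, mul_one] at hsq hcs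
  refine abs_le_of_sq_le_sq ?_ (mul_nonneg hC (hL t ht))
  calc L (t * b) ^ 2 ≤ L t * (C ^ 2 * L t) :=
        hcs.trans (mul_le_mul_of_nonneg_left hsq (hL t ht))
    _ = (C * L t) ^ 2 := by ring

theorem nonempty_kSet (hL : IsPositiveOn S L) (hA : Algebra.FiniteType ℝ A) (hS : S.Finite)
    (hL₀ : L ≠ 0) : (KSet S).Nonempty := by
  refine nonempty_kSet_of_not_isInPreordering_neg_one hA hS fun hneg ↦
    hL₀ (LinearMap.ext fun a ↦ ?_)
  have hL₁ : L 1 = 0 := le_antisymm (by simpa only [map_neg, neg_nonneg] using hL _ hneg)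
    (hL 1 .one)
  have hcs := hL.sq_apply_mul_le 1 a
  rw [one_pow, one_mul, hL₁, zero_mul] at hcs
  exact pow_eq_zero_iff two_ne_zero |>.mp (le_antisymm hcs (sq_nonneg _))

end IsPositiveOn

end PositiveFunctional

section Cap

open scoped ENNReal

variable {A : Type*} [CommRing A] {ι : Type*}

/-- The total mass a functional gives to the squares of the family `a`; on the cone of positive
functionals it is additive, and it serves to cut a compact cap out of that cone. -/
noncomputable def capWeight (a : ι → A) (l : A → ℝ) : ℝ≥0∞ :=
  ∑' i, ENNReal.ofReal (l (a i ^ 2))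

theorem lowerSemicontinuous_capWeight (a : ι → A) : LowerSemicontinuous (capWeight a) :=
  lowerSemicontinuous_tsum fun i ↦
    (ENNReal.continuous_ofReal.comp (continuous_apply (a i ^ 2))).lowerSemicontinuous

variable [Algebra ℝ A]

/-- The cap of the cone of `S`-positive functionals cut out by `capWeight a ≤ 1`, as a set of
functions, so that it carries the topology of pointwise convergence. -/
def positiveCap (S : Set A) (a : ι → A) : Set (A → ℝ) :=
  (⇑) '' {L : A →ₗ[ℝ] ℝ | IsPositiveOn S L ∧ capWeight a L ≤ 1}

variable {S : Set A} {a : ι → A} {L L₁ L₂ : A →ₗ[ℝ] ℝ}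

theorem coe_mem_positiveCap : ⇑L ∈ positiveCap S a ↔ IsPositiveOn S L ∧ capWeight a L ≤ 1 :=
  DFunLike.coe_injective.mem_set_image

theorem isClosed_positiveCap : IsClosed (positiveCap S a) := by
  have heq : positiveCap S a =
      Set.range ((⇑) : (A →ₗ[ℝ] ℝ) → A → ℝ) ∩ (⋂ x, ⋂ (_ : IsInPreordering S x), {l | 0 ≤ l x}) ∩
        capWeight a ⁻¹' Set.Iic 1 := by
    ext l
    simp only [Set.mem_inter_iff, Set.mem_iInter, Set.mem_preimage, Set.mem_Iic]
    constructor
    · rintro ⟨L, ⟨hL, hw⟩, rfl⟩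
      exact ⟨⟨⟨L, rfl⟩, hL⟩, hw⟩
    · rintro ⟨⟨⟨L, rfl⟩, hL⟩, hw⟩
      exact coe_mem_positiveCap.mpr ⟨hL, hw⟩
  rw [heq]
  exact ((LinearMap.isClosed_range_coe A ℝ (RingHom.id ℝ)).inter
    (isClosed_iInter fun x ↦ isClosed_iInter fun _ ↦
      isClosed_le continuous_const (continuous_apply x))).inter
    ((lowerSemicontinuous_capWeight a).isClosed_preimage 1)

theorem IsPositiveOn.apply_add_sq_le (hL : IsPositiveOn S L) (x y : A) :
    L ((x + y) ^ 2) ≤ 2 * L (x ^ 2) + 2 * L (y ^ 2) := by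
  have hpar : (x + y) ^ 2 + (x - y) ^ 2 = (2 : ℝ) • x ^ 2 + (2 : ℝ) • y ^ 2 := by
    simp only [Algebra.smul_def, map_ofNat]
    ring
  have := congrArg L hpar
  simp only [map_add, map_smul, smul_eq_mul] at this
  linarith [hL _ (.sq (x - y))]

theorem exists_forall_mem_positiveCap_apply_sq_le (ha : Submodule.span ℝ (Set.range a) = ⊤)
    (x : A) : ∃ M, ∀ l ∈ positiveCap S a, l (x ^ 2) ≤ M := by
  have hx : x ∈ Submodule.span ℝ (Set.range a) := ha ▸ Submodule.mem_top
  induction hx using Submodule.span_induction with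
  | mem x hx =>
    obtain ⟨i, rfl⟩ := hx
    refine ⟨1, fun l ⟨L, ⟨_, hw⟩, hl⟩ ↦ hl ▸ ENNReal.ofReal_le_one.mp ?_⟩
    exact (ENNReal.le_tsum i).trans hw
  | zero =>
    refine ⟨0, fun l ⟨L, _, hl⟩ ↦ hl ▸ ?_⟩
    rw [zero_pow two_ne_zero, map_zero]
  | add x y _ _ hx hy =>
    obtain ⟨M, hM⟩ := hx
    obtain ⟨N, hN⟩ := hy
    refine ⟨2 * M + 2 * N, ?_⟩
    rintro _ ⟨L, hL, rfl⟩
    linarith [hL.1.apply_add_sq_le x y, hM L ⟨L, hL, rfl⟩, hN L ⟨L, hL, rfl⟩]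
  | smul r x _ hx =>
    obtain ⟨M, hM⟩ := hx
    refine ⟨r ^ 2 * M, ?_⟩
    rintro _ ⟨L, hL, rfl⟩
    rw [smul_pow, map_smul, smul_eq_mul]
    exact mul_le_mul_of_nonneg_left (hM L ⟨L, hL, rfl⟩) (sq_nonneg r)

theorem isCompact_positiveCap (ha : Submodule.span ℝ (Set.range a) = ⊤) :
    IsCompact (positiveCap S a) := by
  choose M hM using exists_forall_mem_positiveCap_apply_sq_le (S := S) ha
  refine (isCompact_univ_pi fun x ↦ isCompact_Icc (a := -(M 1 + M x))
    (b := M 1 + M x)).of_isClosed_subset isClosed_positiveCap ?_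
  rintro _ ⟨L, hL, rfl⟩ x -
  have hone := hM 1 L ⟨L, hL, rfl⟩
  have hsq := hM x L ⟨L, hL, rfl⟩
  have hcs := hL.1.sq_apply_mul_le 1 x
  rw [one_mul] at hcs
  have hone₀ := hL.1 _ (.sq 1)
  have hsq₀ := hL.1 _ (.sq x)
  exact abs_le.mp (abs_le_of_sq_le_sq (by nlinarith) (by linarith))

theorem capWeight_add (hL₁ : IsPositiveOn S L₁) (hL₂ : IsPositiveOn S L₂) :
    capWeight a (L₁ + L₂) = capWeight a L₁ + capWeight a L₂ := by
  rw [capWeight, capWeight, capWeight, ← ENNReal.tsum_add]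
  exact tsum_congr fun i ↦ ENNReal.ofReal_add (hL₁ _ (.sq _)) (hL₂ _ (.sq _))

theorem IsPositiveOn.smul (hL : IsPositiveOn S L) {r : ℝ} (hr : 0 ≤ r) : IsPositiveOn S (r • L) :=
  fun x hx ↦ mul_nonneg hr (hL x hx)

theorem inv_smul_mem_positiveCap (hL : IsPositiveOn S L) {t : ℝ} (ht : 0 < t)
    (hw : capWeight a L ≤ ENNReal.ofReal t) : t⁻¹ • ⇑L ∈ positiveCap S a := by
  refine coe_mem_positiveCap (L := t⁻¹ • L) |>.mpr ⟨hL.smul (inv_nonneg.mpr ht.le), ?_⟩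
  calc capWeight a (t⁻¹ • L) = ENNReal.ofReal t⁻¹ * capWeight a L := by
        rw [capWeight, capWeight, ← ENNReal.tsum_mul_left]
        exact tsum_congr fun i ↦ ENNReal.ofReal_mul (inv_nonneg.mpr ht.le)
    _ ≤ ENNReal.ofReal t⁻¹ * ENNReal.ofReal t := by gcongr
    _ = 1 := by
        rw [← ENNReal.ofReal_mul (inv_nonneg.mpr ht.le), inv_mul_cancel₀ ht.ne', ENNReal.ofReal_one]

theorem IsPositiveOn.eq_zero_of_capWeight_eq_zero (hL : IsPositiveOn S L)
    (ha : Submodule.span ℝ (Set.range a) = ⊤) (hw : capWeight a L = 0) : L = 0 := by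
  refine LinearMap.ext_on_range ha fun i ↦ ?_
  have hcs := hL.sq_apply_mul_le (a i) 1
  have hsq : L (a i ^ 2) = 0 :=
    le_antisymm (ENNReal.ofReal_eq_zero.mp (ENNReal.tsum_eq_zero.mp hw i)) (hL _ (.sq _))
  rw [hsq, zero_mul, mul_one] at hcs
  exact pow_eq_zero_iff two_ne_zero |>.mp (le_antisymm hcs (sq_nonneg _))

theorem exists_eq_smul_of_mem_extremePoints_positiveCap
    (ha : Submodule.span ℝ (Set.range a) = ⊤) (hL₁ : IsPositiveOn S L₁) (hL₂ : IsPositiveOn S L₂)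
    (h : ⇑(L₁ + L₂) ∈ (positiveCap S a).extremePoints ℝ) : ∃ r : ℝ, L₁ = r • (L₁ + L₂) := by
  have hw : capWeight a L₁ + capWeight a L₂ ≤ 1 :=
    capWeight_add hL₁ hL₂ ▸ (coe_mem_positiveCap.mp h.1).2
  lift capWeight a L₁ to NNReal using
    ne_top_of_le_ne_top ENNReal.one_ne_top (le_self_add.trans hw) with p hp
  lift capWeight a L₂ to NNReal using
    ne_top_of_le_ne_top ENNReal.one_ne_top (le_add_self.trans hw) with q hq
  rcases eq_or_ne p 0 with rfl | hp₀
  · exact ⟨0, by rw [zero_smul, hL₁.eq_zero_of_capWeight_eq_zero ha hp.symm]⟩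
  rcases eq_or_ne q 0 with rfl | hq₀
  · exact ⟨1, by rw [hL₂.eq_zero_of_capWeight_eq_zero ha hq.symm, add_zero, one_smul]⟩
  have hp_pos : (0 : ℝ) < p := by positivity
  have hq_pos : (0 : ℝ) < q := by positivity
  have hqp : (q : ℝ) ≤ 1 - p := le_sub_iff_add_le'.mpr (mod_cast hw)
  have hp₁ : (0 : ℝ) < 1 - p := hq_pos.trans_le hqp
  have hmem₁ : (p : ℝ)⁻¹ • ⇑L₁ ∈ positiveCap S a :=
    inv_smul_mem_positiveCap hL₁ hp_pos (by rw [← hp, ENNReal.ofReal_coe_nnreal])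
  have hmem₂ : (1 - p : ℝ)⁻¹ • ⇑L₂ ∈ positiveCap S a :=
    inv_smul_mem_positiveCap hL₂ hp₁
      (by rw [← hq, ← ENNReal.ofReal_coe_nnreal]; exact ENNReal.ofReal_le_ofReal hqp)
  have hseg : ⇑(L₁ + L₂) ∈ openSegment ℝ ((p : ℝ)⁻¹ • ⇑L₁) ((1 - p : ℝ)⁻¹ • ⇑L₂) := by
    refine ⟨p, 1 - p, hp_pos, hp₁, by ring, ?_⟩
    rw [smul_inv_smul₀ hp_pos.ne', smul_inv_smul₀ hp₁.ne']
    rfl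
  refine ⟨p, DFunLike.coe_injective ?_⟩
  rw [LinearMap.coe_smul, ← h.2 hmem₁ hmem₂ hseg, smul_inv_smul₀ hp_pos.ne']

theorem exists_apply_mul_eq_of_mem_extremePoints_positiveCap
    (ha : Submodule.span ℝ (Set.range a) = ⊤) (hL : ⇑L ∈ (positiveCap S a).extremePoints ℝ)
    {b : A} {C : ℝ} (hC : 0 < C) (hb : ∀ t, IsInPreordering S t → |L (t * b)| ≤ C * L t) :
    ∃ r : ℝ, ∀ x, L (b * x) = r * L x := by
  let L₁ : A →ₗ[ℝ] ℝ := (2 * C)⁻¹ • (C • L + L ∘ₗ LinearMap.mulLeft ℝ b)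
  let L₂ : A →ₗ[ℝ] ℝ := (2 * C)⁻¹ • (C • L - L ∘ₗ LinearMap.mulLeft ℝ b)
  have hL₁ (x : A) : L₁ x = (2 * C)⁻¹ * (C * L x + L (x * b)) := by rw [mul_comm x]; rfl
  have hL₂ (x : A) : L₂ x = (2 * C)⁻¹ * (C * L x - L (x * b)) := by rw [mul_comm x]; rfl
  have hadd : L₁ + L₂ = L := by
    ext x
    rw [LinearMap.add_apply, hL₁, hL₂]
    field_simp
    ring
  have hpos₁ : IsPositiveOn S L₁ := fun t ht ↦
    hL₁ t ▸ mul_nonneg (by positivity) (by linarith [abs_le.mp (hb t ht)])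
  have hpos₂ : IsPositiveOn S L₂ := fun t ht ↦
    hL₂ t ▸ mul_nonneg (by positivity) (by linarith [abs_le.mp (hb t ht)])
  obtain ⟨r, hr⟩ := exists_eq_smul_of_mem_extremePoints_positiveCap ha hpos₁ hpos₂ (hadd ▸ hL)
  refine ⟨2 * C * r - C, fun x ↦ ?_⟩
  have hrx := LinearMap.congr_fun hr x
  rw [hadd, hL₁, LinearMap.smul_apply, smul_eq_mul, inv_mul_eq_iff_eq_mul₀ (by positivity)] at hrx
  rw [mul_comm b]
  linarith

theorem exists_mem_extremePoints_apply_le {E : Type*} [AddCommGroup E] [Module ℝ E]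
    [TopologicalSpace E] [T2Space E] [IsTopologicalAddGroup E] [ContinuousSMul ℝ E]
    [LocallyConvexSpace ℝ E] {s : Set E} (hs : IsCompact s) {x : E} (hx : x ∈ s)
    (φ : StrongDual ℝ E) : ∃ e ∈ s.extremePoints ℝ, φ e ≤ φ x := by
  have hexposed : IsExposed ℝ s (ContinuousLinearMap.toExposed (-φ) s) :=
    ContinuousLinearMap.toExposed.isExposed
  obtain ⟨y, hy, hmin⟩ := hs.exists_isMinOn ⟨x, hx⟩ φ.continuous.continuousOn
  obtain ⟨e, he⟩ := (hexposed.isCompact hs).extremePoints_nonempty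
    ⟨y, hy, fun z hz ↦ neg_le_neg (hmin hz)⟩
  exact ⟨e, hexposed.isExtreme.extremePoints_subset_extremePoints he,
    neg_le_neg_iff.mp (he.1.2 x hx)⟩

theorem exists_countable_span_range_eq_top (hA : Algebra.FiniteType ℝ A) :
    ∃ (ι : Type) (_ : Countable ι) (a : ι → A), Submodule.span ℝ (Set.range a) = ⊤ := by
  obtain ⟨n, φ, hφ⟩ := Algebra.FiniteType.iff_quotient_mvPolynomial''.mp hA
  refine ⟨Fin n →₀ ℕ, inferInstance, φ ∘ MvPolynomial.basisMonomials (Fin n) ℝ, ?_⟩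
  rw [Set.range_comp, ← AlgHom.coe_toLinearMap, Submodule.span_image, Module.Basis.span_eq,
    Submodule.map_top, LinearMap.range_eq_top.mpr hφ]

theorem IsPositiveOn.exists_mem_positiveCap (hL : IsPositiveOn S L) [Countable ι]
    (ha : Submodule.span ℝ (Set.range a) = ⊤) :
    ∃ a' : ι → A, Submodule.span ℝ (Set.range a') = ⊤ ∧ ⇑L ∈ positiveCap S a' := by
  obtain ⟨ε, hε, hsum⟩ := ENNReal.exists_pos_sum_of_countable one_ne_zero ι
  have hsq (i : ι) : 0 ≤ L (a i ^ 2) := hL _ (.sq _)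
  have hpos (i : ι) : 0 < ε i / (1 + L (a i ^ 2)) :=
    div_pos (hε i) (by linarith [hsq i])
  refine ⟨fun i ↦ √(ε i / (1 + L (a i ^ 2))) • a i, ?_, coe_mem_positiveCap.mpr ⟨hL, ?_⟩⟩
  · rw [eq_top_iff, ← ha, Submodule.span_le]
    rintro _ ⟨i, rfl⟩
    refine (Submodule.smul_mem_iff _ (Real.sqrt_pos.mpr (hpos i)).ne').mp ?_
    exact Submodule.subset_span ⟨i, rfl⟩
  · refine (ENNReal.tsum_le_tsum fun i ↦ ?_).trans hsum.le
    rw [smul_pow, Real.sq_sqrt (hpos i).le, map_smul, smul_eq_mul, div_mul_eq_mul_div,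
      ← ENNReal.ofReal_coe_nnreal]
    refine ENNReal.ofReal_le_ofReal (div_le_of_le_mul₀ (by linarith [hsq i]) (ε i).2 ?_)
    exact mul_le_mul_of_nonneg_left (by linarith) (ε i).2

theorem IsPositiveOn.exists_apply_le_forall_apply_mul_eq (hL : IsPositiveOn S L)
    (hA : Algebra.FiniteType ℝ A) (hS : S.Finite) (p : A) {J : Type*} {h : J → A}
    (hh : ∀ j, ∃ C, ∀ χ ∈ KSet S, |χ (h j)| ≤ C) :
    ∃ E : A →ₗ[ℝ] ℝ, IsPositiveOn S E ∧ E p ≤ L p ∧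
      ∃ lam : J → ℝ, ∀ j x, E (h j * x) = lam j * E x := by
  obtain ⟨ι, _, a, ha⟩ := exists_countable_span_range_eq_top hA
  obtain ⟨a', ha', hLa'⟩ := hL.exists_mem_positiveCap ha
  obtain ⟨e, he, hep⟩ := exists_mem_extremePoints_apply_le (isCompact_positiveCap ha') hLa'
    (ContinuousLinearMap.proj p)
  obtain ⟨E, ⟨hE, -⟩, rfl⟩ := he.1
  have hlam (j : J) : ∃ r : ℝ, ∀ x, E (h j * x) = r * E x := by
    obtain ⟨C, hC⟩ := hh j
    have hC₀ : 0 < max C 1 := lt_max_of_lt_right one_pos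
    exact exists_apply_mul_eq_of_mem_extremePoints_positiveCap ha' he hC₀ fun t ht ↦
      hE.abs_apply_mul_le hA hS hC₀.le (fun χ hχ ↦ (hC χ hχ).trans (le_max_left C 1)) ht
  choose lam hlam using hlam
  exact ⟨E, hE, hep, lam, hlam⟩

end Cap

section Fibre

variable {A : Type*} [CommRing A] [Algebra ℝ A] {k m : ℕ} {f : Fin k → A} {h : Fin m → A}
  {lam : Fin m → ℝ}

theorem finite_fibreGens : (fibreGens f h lam).Finite :=
  (Set.finite_range f).union (Set.finite_iUnion fun _ ↦ Set.toFinite _)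

theorem mem_kSet_fibreGens_iff {χ : A →ₐ[ℝ] ℝ} :
    χ ∈ KSet (fibreGens f h lam) ↔ χ ∈ KSet (Set.range f) ∧ ∀ j, χ (h j) = lam j := by
  simp [mem_kSet_iff, fibreGens, or_imp, forall_and, le_antisymm_iff, and_comm]

theorem exists_isInPreordering_forall_apply_mul_eq {E : A →ₗ[ℝ] ℝ}
    (hE : ∀ j x, E (h j * x) = lam j * E x) {x : A}
    (hx : IsInPreordering (fibreGens f h lam) x) :
    ∃ t, IsInPreordering (Set.range f) t ∧ ∀ y, E (x * y) = E (t * y) := by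
  induction hx with
  | sq x => exact ⟨x ^ 2, .sq x, fun _ ↦ rfl⟩
  | gen hs =>
    obtain hs | hs := hs
    · exact ⟨_, .gen hs, fun _ ↦ rfl⟩
    obtain ⟨j, hj⟩ := Set.mem_iUnion.mp hs
    have hzero (y : A) : E ((h j - algebraMap ℝ A (lam j)) * y) = 0 := by
      rw [sub_mul, map_sub, hE, ← Algebra.smul_def, map_smul, smul_eq_mul, sub_self]
    refine ⟨0, .zero, fun y ↦ ?_⟩
    rw [zero_mul, map_zero]
    obtain rfl | rfl := hj
    · exact hzero y
    · rw [← neg_sub, neg_mul, map_neg, hzero, neg_zero]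
  | add _ _ hx hz =>
    obtain ⟨t, ht, htx⟩ := hx
    obtain ⟨s, hs, hsz⟩ := hz
    exact ⟨t + s, ht.add hs, fun y ↦ by rw [add_mul, add_mul, map_add, map_add, htx, hsz]⟩
  | mul _ _ hx hz =>
    obtain ⟨t, ht, htx⟩ := hx
    obtain ⟨s, hs, hsz⟩ := hz
    exact ⟨t * s, ht.mul hs, fun y ↦ by
      rw [mul_assoc, htx, mul_left_comm, hsz, mul_left_comm, mul_assoc]⟩

theorem IsPositiveOn.fibreGens {E : A →ₗ[ℝ] ℝ} (hE : IsPositiveOn (Set.range f) E)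
    (hlam : ∀ j x, E (h j * x) = lam j * E x) : IsPositiveOn (fibreGens f h lam) E := by
  intro x hx
  obtain ⟨t, ht, hxt⟩ := exists_isInPreordering_forall_apply_mul_eq hlam hx
  rw [← mul_one x, hxt 1, mul_one]
  exact hE t ht

end Fibre

section CharacterSpace

open Topology

variable {A : Type*} [CommRing A] [Algebra ℝ A]

theorem isClosedEmbedding_character :
    IsClosedEmbedding fun (χ : A →ₐ[ℝ] ℝ) (a : A) ↦ χ a := by
  have hrange : Set.range (fun (χ : A →ₐ[ℝ] ℝ) (a : A) ↦ χ a) =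
      Set.range ((⇑) : (A →ₗ[ℝ] ℝ) → A → ℝ) ∩ Set.range ((⇑) : (A →* ℝ) → A → ℝ) := by
    ext l
    constructor
    · rintro ⟨χ, rfl⟩
      exact ⟨⟨χ.toLinearMap, rfl⟩, ⟨χ, rfl⟩⟩
    · rintro ⟨⟨L, rfl⟩, ⟨ψ, hψ⟩⟩
      exact ⟨AlgHom.ofLinearMap L (hψ ▸ map_one ψ) (hψ ▸ map_mul ψ), rfl⟩
  refine ⟨⟨⟨rfl⟩, DFunLike.coe_injective⟩, hrange ▸ ?_⟩
  exact (LinearMap.isClosed_range_coe A ℝ (RingHom.id ℝ)).inter (MonoidHom.isClosed_range_coe A ℝ)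

theorem continuous_character_apply (a : A) : Continuous fun χ : A →ₐ[ℝ] ℝ ↦ χ a :=
  (continuous_apply a).comp isClosedEmbedding_character.continuous

instance : T2Space (A →ₐ[ℝ] ℝ) := isClosedEmbedding_character.isEmbedding.t2Space

instance : BorelSpace (A →ₐ[ℝ] ℝ) := ⟨rfl⟩

theorem exists_forall_abs_character_apply_le {s : Finset A}
    (hs : Algebra.adjoin ℝ (s : Set A) = ⊤) (ρ : ℝ) (a : A) :
    ∃ M, ∀ χ : A →ₐ[ℝ] ℝ, χ (∑ x ∈ s, x ^ 2) ≤ ρ → |χ a| ≤ M := by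
  have ha : a ∈ Algebra.adjoin ℝ (s : Set A) := hs ▸ Algebra.mem_top
  induction ha using Algebra.adjoin_induction with
  | mem x hx =>
    refine ⟨√ρ, fun χ hχ ↦ Real.abs_le_sqrt (le_trans ?_ hχ)⟩
    rw [map_sum, ← map_pow]
    exact Finset.single_le_sum (f := fun y ↦ χ (y ^ 2))
      (fun y _ ↦ map_pow χ y 2 ▸ sq_nonneg (χ y)) hx
  | algebraMap r => exact ⟨|r|, fun χ _ ↦ (congrArg abs (χ.commutes r)).le⟩
  | add x y _ _ hx hy =>
    obtain ⟨M, hM⟩ := hx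
    obtain ⟨N, hN⟩ := hy
    exact ⟨M + N, fun χ hχ ↦
      map_add χ x y ▸ (abs_add_le _ _).trans (add_le_add (hM χ hχ) (hN χ hχ))⟩
  | mul x y _ _ hx hy =>
    obtain ⟨M, hM⟩ := hx
    obtain ⟨N, hN⟩ := hy
    refine ⟨M * N, fun χ hχ ↦ ?_⟩
    rw [map_mul, abs_mul]
    exact mul_le_mul (hM χ hχ) (hN χ hχ) (abs_nonneg _) ((abs_nonneg _).trans (hM χ hχ))

theorem exists_forall_isCompact_setOf_character_apply_le (hA : Algebra.FiniteType ℝ A) :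
    ∃ q : A, (∀ χ : A →ₐ[ℝ] ℝ, 0 ≤ χ q) ∧ ∀ ρ, IsCompact {χ : A →ₐ[ℝ] ℝ | χ q ≤ ρ} := by
  obtain ⟨s, hs⟩ := hA.out
  refine ⟨∑ x ∈ s, x ^ 2, fun χ ↦ ?_, fun ρ ↦ ?_⟩
  · rw [map_sum]
    exact Finset.sum_nonneg fun x _ ↦ map_pow χ x 2 ▸ sq_nonneg (χ x)
  choose M hM using exists_forall_abs_character_apply_le hs ρ
  refine (isClosedEmbedding_character.isCompact_preimage
    (isCompact_univ_pi fun x ↦ isCompact_Icc (a := -M x) (b := M x))).of_isClosed_subset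
    (isClosed_le (continuous_character_apply _) continuous_const) ?_
  exact fun χ hχ x _ ↦ abs_le.mp (hM x χ hχ)

theorem locallyCompactSpace_character {q : A}
    (hq : ∀ ρ, IsCompact {χ : A →ₐ[ℝ] ℝ | χ q ≤ ρ}) : LocallyCompactSpace (A →ₐ[ℝ] ℝ) := by
  have : WeaklyLocallyCompactSpace (A →ₐ[ℝ] ℝ) := by
    refine ⟨fun χ ↦ ⟨_, hq (χ q + 1), ?_⟩⟩
    filter_upwards [(continuous_character_apply q).continuousAt.eventually_lt_const
      (lt_add_one (χ q))] with ψ hψ using hψ.le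
  infer_instance

end CharacterSpace

section Haviland

open Filter Topology
open scoped CompactlySupported

theorem exists_linearMap_forall_add_nonneg {V W E : Type*} [AddCommGroup V] [Module ℝ V]
    [AddCommGroup W] [Module ℝ W] [AddCommGroup E] [Module ℝ E] [PartialOrder E]
    [IsOrderedAddMonoid E] [PosSMulMono ℝ E] (i : V →ₗ[ℝ] E) (j : W →ₗ[ℝ] E)
    (hij : ∀ w, ∃ v, 0 ≤ i v + j w) {L : V →ₗ[ℝ] ℝ} (hL : ∀ v, 0 ≤ i v → 0 ≤ L v) :
    ∃ Λ : W →ₗ[ℝ] ℝ, ∀ v w, 0 ≤ i v + j w → 0 ≤ L v + Λ w := by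
  let C : PointedCone ℝ (V × W) := (PointedCone.positive ℝ E).comap (i.coprod j)
  have hC {v : V} {w : W} : (v, w) ∈ C ↔ 0 ≤ i v + j w := Iff.rfl
  let L' : V × W →ₗ.[ℝ] ℝ :=
    ⟨Submodule.prod ⊤ ⊥, L ∘ₗ LinearMap.fst ℝ V W ∘ₗ Submodule.subtype _⟩
  have hdom (v : V) : (v, 0) ∈ L'.domain := ⟨trivial, rfl⟩
  have hL' (z : L'.domain) (hz : (z : V × W) ∈ C) : 0 ≤ L' z := by
    obtain ⟨⟨v, w⟩, _, rfl : w = 0⟩ := z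
    refine hL v ?_
    simpa only [map_zero, add_zero] using hC.mp hz
  have hdominate (z : V × W) : ∃ z' : L'.domain, (z' : V × W) + z ∈ C := by
    obtain ⟨v, hv⟩ := hij z.2
    refine ⟨⟨_, hdom (v - z.1)⟩, hC.mpr ?_⟩
    rwa [sub_add_cancel, zero_add]
  obtain ⟨g, hgL, hgC⟩ := riesz_extension C L' hL' hdominate
  refine ⟨g ∘ₗ LinearMap.inr ℝ V W, fun v w hvw ↦ ?_⟩
  have hsplit : g (v, w) = L v + g (0, w) := by
    rw [← show g (v, 0) = L v from hgL ⟨_, hdom v⟩, ← map_add, Prod.mk_add_mk, add_zero, zero_add]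
  exact hsplit ▸ hgC (v, w) (hC.mpr hvw)

theorem integrable_and_integral_eq_of_tendsto_of_monotone {Ω : Type*} [MeasurableSpace Ω]
    {μ : Measure Ω} {F : ℕ → Ω → ℝ} {g : Ω → ℝ} {c : ℝ} (hF : ∀ n, Integrable (F n) μ)
    (hF₀ : ∀ n x, 0 ≤ F n x) (hmono : ∀ x, Monotone fun n ↦ F n x)
    (hlim : ∀ x, Tendsto (fun n ↦ F n x) atTop (𝓝 (g x)))
    (hint : Tendsto (fun n ↦ ∫ x, F n x ∂μ) atTop (𝓝 c)) :
    Integrable g μ ∧ ∫ x, g x ∂μ = c := by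
  have hlintegral : Tendsto (fun n ↦ ∫⁻ x, ENNReal.ofReal (F n x) ∂μ) atTop
      (𝓝 (∫⁻ x, ENNReal.ofReal (g x) ∂μ)) :=
    lintegral_tendsto_of_tendsto_of_monotone (fun n ↦ (hF n).aemeasurable.ennreal_ofReal)
      (ae_of_all _ fun x _ _ hmn ↦ ENNReal.ofReal_le_ofReal (hmono x hmn))
      (ae_of_all _ fun x ↦ ENNReal.tendsto_ofReal (hlim x))
  have hfinite : ∫⁻ x, ENNReal.ofReal (g x) ∂μ = ENNReal.ofReal c := by
    refine tendsto_nhds_unique hlintegral ((ENNReal.tendsto_ofReal hint).congr fun n ↦ ?_)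
    exact ofReal_integral_eq_lintegral_ofReal (hF n) (ae_of_all _ (hF₀ n))
  have hg₀ (x : Ω) : 0 ≤ g x := ge_of_tendsto' (hlim x) fun n ↦ hF₀ n x
  have hg : Integrable g μ :=
    ⟨aestronglyMeasurable_of_tendsto_ae _ (fun n ↦ (hF n).aestronglyMeasurable)
      (ae_of_all _ hlim), by
      rw [hasFiniteIntegral_iff_ofReal (ae_of_all _ hg₀), hfinite]
      exact ENNReal.ofReal_lt_top⟩
  exact ⟨hg, tendsto_nhds_unique
    (integral_tendsto_of_tendsto_of_monotone hF hg (ae_of_all _ hmono) (ae_of_all _ hlim)) hint⟩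

variable {A : Type*} [CommRing A] [Algebra ℝ A] {q : A}

/-- A continuous cutoff on the character space, equal to `1` where `q ≤ n + 1` and to `0` where
`n + 2 ≤ q`. -/
noncomputable def characterCutoff (q : A) (n : ℕ) (χ : A →ₐ[ℝ] ℝ) : ℝ :=
  max 0 (min 1 (n + 2 - χ q))

theorem characterCutoff_nonneg (n : ℕ) (χ : A →ₐ[ℝ] ℝ) : 0 ≤ characterCutoff q n χ :=
  le_max_left _ _

theorem characterCutoff_le_one (n : ℕ) (χ : A →ₐ[ℝ] ℝ) : characterCutoff q n χ ≤ 1 :=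
  max_le zero_le_one (min_le_left _ _)

theorem characterCutoff_eq_one {n : ℕ} {χ : A →ₐ[ℝ] ℝ} (h : χ q ≤ n + 1) :
    characterCutoff q n χ = 1 := by
  rw [characterCutoff, min_eq_left (by linarith), max_eq_right zero_le_one]

theorem characterCutoff_eq_zero {n : ℕ} {χ : A →ₐ[ℝ] ℝ} (h : n + 2 ≤ χ q) :
    characterCutoff q n χ = 0 :=
  max_eq_left ((min_le_right _ _).trans (sub_nonpos.mpr h))

theorem monotone_characterCutoff (χ : A →ₐ[ℝ] ℝ) : Monotone fun n ↦ characterCutoff q n χ := by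
  intro m n hmn
  have hmn' : (m : ℝ) ≤ n := mod_cast hmn
  exact max_le_max_left 0 (min_le_min_left 1 (by linarith))

theorem one_sub_div_le_characterCutoff {χ : A →ₐ[ℝ] ℝ} (hq : 0 ≤ χ q) (n : ℕ) :
    1 - χ q / (n + 1) ≤ characterCutoff q n χ := by
  rcases le_or_gt (χ q) (n + 1) with h | h
  · rw [characterCutoff_eq_one h]
    exact sub_le_self _ (by positivity)
  · refine (sub_nonpos.mpr ?_).trans (characterCutoff_nonneg n χ)
    exact (one_le_div₀ (by positivity)).mpr h.le

theorem tendsto_characterCutoff (χ : A →ₐ[ℝ] ℝ) :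
    Tendsto (fun n ↦ characterCutoff q n χ) atTop (𝓝 1) := by
  refine tendsto_const_nhds.congr' ?_
  filter_upwards [tendsto_natCast_atTop_atTop.eventually_ge_atTop (χ q)] with n hn
  exact (characterCutoff_eq_one (by linarith)).symm

theorem continuous_characterCutoff (n : ℕ) : Continuous (characterCutoff q n) :=
  continuous_const.max (continuous_const.min
    (continuous_const.sub (continuous_character_apply q)))

/-- The evaluation at `a`, cut off to a compactly supported function on the character space. -/
noncomputable def truncatedEval (hq : ∀ ρ, IsCompact {χ : A →ₐ[ℝ] ℝ | χ q ≤ ρ}) (a : A) (n : ℕ) :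
    C_c(A →ₐ[ℝ] ℝ, ℝ) where
  toFun χ := χ a * characterCutoff q n χ
  continuous_toFun := (continuous_character_apply a).mul (continuous_characterCutoff n)
  hasCompactSupport' := HasCompactSupport.intro (hq (n + 2)) fun χ hχ ↦ by
    rw [characterCutoff_eq_zero (not_le.mp hχ).le, mul_zero]

theorem truncatedEval_apply (hq : ∀ ρ, IsCompact {χ : A →ₐ[ℝ] ℝ | χ q ≤ ρ}) (a : A) (n : ℕ)
    (χ : A →ₐ[ℝ] ℝ) : truncatedEval hq a n χ = χ a * characterCutoff q n χ :=
  rfl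

variable {L : A →ₗ[ℝ] ℝ}

theorem exists_positiveLinearMap_forall_add_nonneg
    (hL : ∀ a : A, (∀ χ : A →ₐ[ℝ] ℝ, 0 ≤ χ a) → 0 ≤ L a) :
    ∃ Λ : C_c(A →ₐ[ℝ] ℝ, ℝ) →ₚ[ℝ] ℝ, ∀ (a : A) (φ : C_c(A →ₐ[ℝ] ℝ, ℝ)),
      (∀ χ, 0 ≤ χ a + φ χ) → 0 ≤ L a + Λ φ := by
  let eval : A →ₗ[ℝ] (A →ₐ[ℝ] ℝ) → ℝ := LinearMap.pi fun χ ↦ χ.toLinearMap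
  let coe : C_c(A →ₐ[ℝ] ℝ, ℝ) →ₗ[ℝ] (A →ₐ[ℝ] ℝ) → ℝ := ⟨⟨(⇑), fun _ _ ↦ rfl⟩, fun _ _ ↦ rfl⟩
  have hdominate (φ : C_c(A →ₐ[ℝ] ℝ, ℝ)) : ∃ a, 0 ≤ eval a + coe φ := by
    obtain ⟨M, hM⟩ := φ.hasCompactSupport.exists_bound_of_continuous φ.continuous
    refine ⟨algebraMap ℝ A M, fun χ ↦ ?_⟩
    change 0 ≤ χ (algebraMap ℝ A M) + φ χ
    rw [AlgHom.commutes, Algebra.algebraMap_self_apply]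
    linarith [abs_le.mp (hM χ)]
  obtain ⟨Λ, hΛ⟩ := exists_linearMap_forall_add_nonneg eval coe hdominate hL
  refine ⟨PositiveLinearMap.mk₀ Λ fun φ hφ ↦ ?_, hΛ⟩
  have hφ₀ : 0 ≤ eval 0 + coe φ := by rwa [map_zero, zero_add]
  simpa only [map_zero, zero_add] using hΛ 0 φ hφ₀

theorem tendsto_apply_truncatedEval {Λ : C_c(A →ₐ[ℝ] ℝ, ℝ) →ₚ[ℝ] ℝ}
    (hΛ : ∀ (a : A) (φ : C_c(A →ₐ[ℝ] ℝ, ℝ)), (∀ χ, 0 ≤ χ a + φ χ) → 0 ≤ L a + Λ φ)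
    (hq₀ : ∀ χ : A →ₐ[ℝ] ℝ, 0 ≤ χ q) (hq : ∀ ρ, IsCompact {χ : A →ₐ[ℝ] ℝ | χ q ≤ ρ})
    {a : A} (ha : ∀ χ : A →ₐ[ℝ] ℝ, 0 ≤ χ a) :
    Tendsto (fun n ↦ Λ (truncatedEval hq a n)) atTop (𝓝 (L a)) := by
  have hupper (n : ℕ) : Λ (truncatedEval hq a n) ≤ L a := by
    rw [← sub_nonneg, sub_eq_add_neg, ← map_neg]
    refine hΛ a _ fun χ ↦ ?_
    rw [CompactlySupportedContinuousMap.coe_neg, Pi.neg_apply, truncatedEval_apply,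
      ← sub_eq_add_neg, sub_nonneg]
    exact mul_le_of_le_one_right (ha χ) (characterCutoff_le_one n χ)
  have hlower (n : ℕ) : L a - L (q * a) * (1 / ((n : ℝ) + 1)) ≤ Λ (truncatedEval hq a n) := by
    have h := hΛ ((1 / ((n : ℝ) + 1)) • (q * a) - a) (truncatedEval hq a n) fun χ ↦ by
      rw [map_sub, map_smul, map_mul, smul_eq_mul, truncatedEval_apply]
      have := mul_le_mul_of_nonneg_left (one_sub_div_le_characterCutoff (hq₀ χ) n) (ha χ)
      linear_combination this
    rw [map_sub, map_smul, smul_eq_mul] at h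
    linarith
  refine tendsto_of_tendsto_of_tendsto_of_le_of_le ?_ tendsto_const_nhds hlower hupper
  simpa only [mul_zero, sub_zero] using
    (tendsto_one_div_add_atTop_nhds_zero_nat.const_mul (L (q * a))).const_sub (L a)

theorem isMomentFunctional_of_forall_nonneg {μ : Measure (A →ₐ[ℝ] ℝ)}
    (h : ∀ a : A, (∀ χ : A →ₐ[ℝ] ℝ, 0 ≤ χ a) →
      Integrable (fun χ : A →ₐ[ℝ] ℝ ↦ χ a) μ ∧ ∫ χ : A →ₐ[ℝ] ℝ, χ a ∂μ = L a) :
    IsMomentFunctional L := by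
  refine ⟨μ, fun a ↦ ?_⟩
  obtain ⟨u, v, huv⟩ : ∃ u v : A, a = u ^ 2 - v ^ 2 := by
    obtain ⟨c, hc⟩ : ∃ c : A, 2 * c = 1 := ⟨algebraMap ℝ A 2⁻¹, by
      rw [← map_ofNat (algebraMap ℝ A) 2, ← map_mul, mul_inv_cancel₀ two_ne_zero, map_one]⟩
    exact ⟨c * (a + 1), c * (a - 1), by linear_combination (-(2 * c + 1) * a) * hc⟩
  have hsq (w : A) := h (w ^ 2) fun χ ↦ map_pow χ w 2 ▸ sq_nonneg (χ w)
  obtain ⟨hu, huL⟩ := hsq u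
  obtain ⟨hv, hvL⟩ := hsq v
  simp only [huv, map_sub]
  exact ⟨hu.sub hv, by rw [integral_sub hu hv, huL, hvL]⟩

theorem isMomentFunctional_of_forall_character_nonneg (hA : Algebra.FiniteType ℝ A)
    (hL : ∀ a : A, (∀ χ : A →ₐ[ℝ] ℝ, 0 ≤ χ a) → 0 ≤ L a) : IsMomentFunctional L := by
  obtain ⟨q, hq₀, hq⟩ := exists_forall_isCompact_setOf_character_apply_le hA
  have := locallyCompactSpace_character hq
  obtain ⟨Λ, hΛ⟩ := exists_positiveLinearMap_forall_add_nonneg hL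
  refine isMomentFunctional_of_forall_nonneg (μ := RealRMK.rieszMeasure Λ) fun a ha ↦ ?_
  refine integrable_and_integral_eq_of_tendsto_of_monotone
    (F := fun n ↦ truncatedEval hq a n) (fun n ↦ ?_) (fun n χ ↦ ?_) (fun χ m n hmn ↦ ?_)
    (fun χ ↦ ?_) ?_
  · exact (truncatedEval hq a n).continuous.integrable_of_hasCompactSupport
      (truncatedEval hq a n).hasCompactSupport
  · exact mul_nonneg (ha χ) (characterCutoff_nonneg n χ)
  · exact mul_le_mul_of_nonneg_left (monotone_characterCutoff χ hmn) (ha χ)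
  · simpa only [truncatedEval_apply, mul_one] using (tendsto_characterCutoff χ).const_mul (χ a)
  · simpa only [RealRMK.integral_rieszMeasure] using tendsto_apply_truncatedEval hΛ hq₀ hq ha

theorem IsMomentFunctional.apply_nonneg (hL : IsMomentFunctional L) {a : A}
    (ha : ∀ χ : A →ₐ[ℝ] ℝ, 0 ≤ χ a) : 0 ≤ L a := by
  obtain ⟨μ, hμ⟩ := hL
  exact (hμ a).2 ▸ integral_nonneg ha

end Haviland

/-- **Fibre theorem, (MP) version.** Let `A` be a finitely generated commutative
real unital algebra, `T` the preordering generated by `f₁, …, f_k`, and let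
`h₁, …, h_m ∈ A` be bounded on `K(T)`. Then `T` has (MP) iff every fibre
preordering `T_λ`, `λ ∈ h(K(T))`, has (MP). -/
theorem fibre_theorem_MP {A : Type*} [CommRing A] [Algebra ℝ A]
    (hfg : Algebra.FiniteType ℝ A) {k m : ℕ} (f : Fin k → A) (h : Fin m → A)
    (hbd : ∃ C : ℝ, ∀ χ ∈ KSet (Set.range f), ∀ j : Fin m, |χ (h j)| ≤ C) :
    HasMP (Set.range f) ↔
      ∀ lam : Fin m → ℝ,
        (∃ χ ∈ KSet (Set.range f), ∀ j : Fin m, χ (h j) = lam j) →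
        HasMP (fibreGens f h lam) := by
  refine ⟨fun hMP lam _ L hL ↦ hMP L fun a ha ↦ hL a (ha.mono Set.subset_union_left),
    fun hfib L hL ↦ isMomentFunctional_of_forall_character_nonneg hfg fun p hp ↦ ?_⟩
  obtain ⟨C, hC⟩ := hbd
  obtain ⟨E, hE, hEp, lam, hlam⟩ := IsPositiveOn.exists_apply_le_forall_apply_mul_eq hL hfg
    (Set.finite_range f) p fun j ↦ ⟨C, fun χ hχ ↦ hC χ hχ j⟩
  refine le_trans ?_ hEp
  rcases eq_or_ne E 0 with rfl | hE₀
  · exact le_rfl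
  have hE' : IsPositiveOn (fibreGens f h lam) E := hE.fibreGens hlam
  obtain ⟨χ, hχ⟩ := hE'.nonempty_kSet hfg finite_fibreGens hE₀
  exact (hfib lam ⟨χ, mem_kSet_fibreGens_iff.mp hχ⟩ E hE').apply_nonneg hp
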